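/- Let A be an n×n real positive-semidefinite matrix, let 1 ≤ r < k ≤ n, and let Ω be an n×k random matrix with independent standard normal entries. Define the Nyström approximation Â = AΩ((Ω*AΩ)†)Ω*A and let Â_r = ⟦Â⟧_r. Then E‖A − Â_r‖₁ ≤ ‖A − ⟦A⟧_r‖₁ + 2·min over natural numbers ϱ with ϱ < k − 1 of [(1 + ϱ/(k − ϱ − 1)) · ‖A − ⟦A⟧_ϱ‖₁]. -/

import Mathlib

open Matrix MeasureTheory ProbabilityTheory
open scoped ENNReal NNReal ComplexOrder Classical

namespace PsdSketch

variable {𝕜 : Type*} [RCLike 𝕜]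

/-- The four Penrose conditions characterizing the Moore–Penrose pseudoinverse. -/
def IsMoorePenrose {m k : ℕ} (M : Matrix (Fin m) (Fin k) 𝕜)
    (X : Matrix (Fin k) (Fin m) 𝕜) : Prop :=
  M * X * M = M ∧ X * M * X = X ∧ (M * X)ᴴ = M * X ∧ (X * M)ᴴ = X * M

/-- The Moore–Penrose pseudoinverse `M†` (the unique matrix satisfying the
Penrose conditions). -/
noncomputable def pinv {m k : ℕ} (M : Matrix (Fin m) (Fin k) 𝕜) :
    Matrix (Fin k) (Fin m) 𝕜 :=
  if h : ∃ X, IsMoorePenrose M X then h.choose else 0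

/-- The Nyström approximation `Â = A Ω ((Ω* A Ω)†) Ω* A`. -/
noncomputable def nystrom {n k : ℕ} (A : Matrix (Fin n) (Fin n) 𝕜)
    (Ω : Matrix (Fin n) (Fin k) 𝕜) : Matrix (Fin n) (Fin n) 𝕜 :=
  A * Ω * pinv (Ωᴴ * A * Ω) * Ωᴴ * A

/-- The `i`-th singular value of a square matrix, 0-indexed and listed in weakly
decreasing order (so `sval M 0 = σ₁(M)`), with `sval M i = 0` for `i ≥ n`. -/
noncomputable def sval {n : ℕ} (M : Matrix (Fin n) (Fin n) 𝕜) (i : ℕ) : ℝ :=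
  if h : i < n then
    Real.sqrt
      ((Matrix.posSemidef_conjTranspose_mul_self M).1.eigenvalues
        (Tuple.sort (Matrix.posSemidef_conjTranspose_mul_self M).1.eigenvalues
          (Fin.rev ⟨i, h⟩)))
  else 0

/-- The Schatten `p`-norm: the `ℓ_p` norm of the vector of singular values. -/
noncomputable def schatten {n : ℕ} (p : ℝ≥0∞) (M : Matrix (Fin n) (Fin n) 𝕜) : ℝ :=
  if p = ∞ then sval M 0
  else (∑ i ∈ Finset.range n, sval M i ^ p.toReal) ^ (1 / p.toReal)

/-- `σ_{r+1}^{(p)}(M)`, the optimal rank-`r` approximation error of `M` in the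
Schatten `p`-norm: `(Σ_{i > r} σ_i(M)^p)^{1/p}` (for `p = ∞`, `σ_{r+1}(M)`). -/
noncomputable def tailNorm {n : ℕ} (p : ℝ≥0∞) (M : Matrix (Fin n) (Fin n) 𝕜)
    (r : ℕ) : ℝ :=
  if p = ∞ then sval M r
  else (∑ i ∈ Finset.Ico r n, sval M i ^ p.toReal) ^ (1 / p.toReal)

/-- `B` is a (simultaneous) best rank-`r` approximation of `M` with respect to every
Schatten `p`-norm; this is the defining property of an `r`-truncated SVD `⟦M⟧_r`. -/
def IsBestRankApprox {n : ℕ} (M B : Matrix (Fin n) (Fin n) 𝕜) (r : ℕ) : Prop :=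
  B.rank ≤ r ∧
    ∀ p : ℝ≥0∞, 1 ≤ p → ∀ C : Matrix (Fin n) (Fin n) 𝕜, C.rank ≤ r →
      schatten p (M - B) ≤ schatten p (M - C)

/-- `⟦M⟧_r`: a best rank-`r` approximation of `M` (an `r`-truncated SVD). -/
noncomputable def truncate {n : ℕ} (M : Matrix (Fin n) (Fin n) 𝕜) (r : ℕ) :
    Matrix (Fin n) (Fin n) 𝕜 :=
  if h : ∃ B, IsBestRankApprox M B r then h.choose else 0

/-- The distribution of an `n × k` random matrix with independent standard normal
entries (matrices identified with functions `Fin n → Fin k → ℝ`). -/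
noncomputable def gaussianEnsemble (n k : ℕ) : Measure (Fin n → Fin k → ℝ) :=
  Measure.pi fun _ => Measure.pi fun _ => gaussianReal 0 1

/-!
The Nyström error is a Schur complement: completing the square shows that
`tr (A - nystrom A Ω)` is the minimum over `Y` of `tr ((1 - Ω Y)ᴴ A (1 - Ω Y))`. By orthogonal
invariance of the Gaussian law `A` may be taken diagonal with decreasing entries. Let the columns of
`Y` be the family biorthogonal to the first `ϱ` rows of `Ω`, and zero elsewhere. Then `1 - Ω Y`
vanishes in the first `ϱ` rows, and row `i > ϱ` has squared norm `1 + ∑ j, ⟪y j, ω i⟫ ^ 2`, of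
expectation `1 + ∑ j, 𝔼 ‖y j‖ ^ 2` since `ω i` is independent of `y`. As `‖y j‖⁻¹` is the distance
of `ω j` to the span of the other rows, the norm of a standard Gaussian vector in dimension
`k - ϱ + 1`, the expectation of `‖y j‖ ^ 2` is `1 / (k - ϱ - 1)`.

Truncating `Â = nystrom A Ω` adds only the tail of the singular values of `Â`, which is at most that
of `A` because `Â ≤ A`. Hence the error bound holds with the factor `1` instead of `2`.
-/

section Spectral

variable {ι : Type*} [Fintype ι] [DecidableEq ι]

/-- The Hermitian matrix `U diag(d) Uᴴ`: its eigenvalues are the `d i` and the columns of the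
unitary matrix `U` are corresponding eigenvectors. Spectral projections are the special case of
an indicator function `d`. -/
noncomputable def ofSpectrum (U : unitaryGroup ι 𝕜) (d : ι → ℝ) : Matrix ι ι 𝕜 :=
  Unitary.conjStarAlgAut 𝕜 _ U (diagonal fun i => (d i : 𝕜))

variable (U : unitaryGroup ι 𝕜) (d e : ι → ℝ)

lemma ofSpectrum_eq :
    ofSpectrum U d = (U : Matrix ι ι 𝕜) * diagonal (fun i => (d i : 𝕜)) * (U : Matrix ι ι 𝕜)ᴴ :=
  rfl

lemma ofSpectrum_mul : ofSpectrum U d * ofSpectrum U e = ofSpectrum U (d * e) := by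
  rw [ofSpectrum, ofSpectrum, ← map_mul, diagonal_mul_diagonal]
  simp only [ofSpectrum, Pi.mul_apply, RCLike.ofReal_mul]

lemma ofSpectrum_add : ofSpectrum U d + ofSpectrum U e = ofSpectrum U (d + e) := by
  rw [ofSpectrum, ofSpectrum, ← map_add, diagonal_add]
  simp only [ofSpectrum, Pi.add_apply, RCLike.ofReal_add]

lemma ofSpectrum_const (t : ℝ) : ofSpectrum U (fun _ => t) = (t : 𝕜) • (1 : Matrix ι ι 𝕜) := by
  rw [ofSpectrum, ← smul_one_eq_diagonal, map_smul, map_one]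

lemma conjTranspose_ofSpectrum : (ofSpectrum U d)ᴴ = ofSpectrum U d := by
  rw [ofSpectrum, ← star_eq_conjTranspose, ← map_star, star_eq_conjTranspose,
    diagonal_conjTranspose]
  congr
  ext i
  simp

lemma trace_ofSpectrum : (ofSpectrum U d).trace = ((∑ i, d i : ℝ) : 𝕜) := by
  rw [ofSpectrum_eq, trace_mul_comm, ← mul_assoc, ← star_eq_conjTranspose,
    Unitary.coe_star_mul_self, one_mul, trace_diagonal, RCLike.ofReal_sum]

lemma posSemidef_ofSpectrum {d : ι → ℝ} (hd : ∀ i, 0 ≤ d i) : (ofSpectrum U d).PosSemidef :=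
  (PosSemidef.diagonal fun i => RCLike.ofReal_nonneg.mpr (hd i)).mul_mul_conjTranspose_same _

lemma rank_ofSpectrum_le : (ofSpectrum U d).rank ≤ Nat.card {i // d i ≠ 0} := by
  rw [ofSpectrum_eq, Nat.card_eq_fintype_card]
  refine (rank_mul_le_left _ _).trans ((rank_mul_le_right _ _).trans_eq ?_)
  simp only [rank_diagonal, ne_eq, RCLike.ofReal_eq_zero]

open scoped Matrix.Norms.L2Operator in
lemma l2_opNorm_ofSpectrum : ‖ofSpectrum U d‖ = ‖d‖ := by
  rw [ofSpectrum_eq, ← star_eq_conjTranspose, ← Unitary.coe_star, CStarRing.norm_mul_coe_unitary,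
    CStarRing.norm_coe_unitary_mul, l2_opNorm_diagonal]
  simp only [Pi.norm_def, nnnorm_algebraMap']

lemma exists_ofSpectrum_comp_equiv (σ : ι ≃ ι) :
    ∃ V : unitaryGroup ι 𝕜, ofSpectrum V (d ∘ σ) = ofSpectrum U d := by
  have hV : (U : Matrix ι ι 𝕜).submatrix id σ ∈ unitaryGroup ι 𝕜 := by
    rw [mem_unitaryGroup_iff, star_eq_conjTranspose, conjTranspose_submatrix, submatrix_mul_equiv,
      ← star_eq_conjTranspose, mem_unitaryGroup_iff.mp U.2, submatrix_one _ Function.injective_id]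
  refine ⟨⟨_, hV⟩, ?_⟩
  have hd : diagonal (fun i => ((d ∘ σ) i : 𝕜)) = (diagonal fun i => (d i : 𝕜)).submatrix σ σ :=
    (submatrix_diagonal_equiv (fun i => (d i : 𝕜)) σ).symm
  rw [ofSpectrum_eq, ofSpectrum_eq, hd, conjTranspose_submatrix, submatrix_mul_equiv,
    submatrix_mul_equiv, submatrix_id_id]

omit [DecidableEq ι] in
lemma rank_add_le (C D : Matrix ι ι 𝕜) : (C + D).rank ≤ C.rank + D.rank := by
  rw [Matrix.rank, mulVecLin_add]
  exact (Submodule.finrank_mono (LinearMap.range_add_le C.mulVecLin D.mulVecLin)).trans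
    (Submodule.finrank_add_le_finrank_add_finrank _ _)

omit [DecidableEq ι] in
lemma exists_ne_zero_mulVec_eq_zero_of_rank_add_lt {C D : Matrix ι ι 𝕜}
    (h : C.rank + D.rank < Fintype.card ι) : ∃ x ≠ 0, C *ᵥ x = 0 ∧ D *ᵥ x = 0 := by
  have hC := C.mulVecLin.finrank_range_add_finrank_ker
  have hD := D.mulVecLin.finrank_range_add_finrank_ker
  have hsup := (C.mulVecLin.ker ⊔ D.mulVecLin.ker).finrank_le
  have hinf := Submodule.finrank_sup_add_finrank_inf_eq C.mulVecLin.ker D.mulVecLin.ker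
  rw [Module.finrank_fintype_fun_eq_card] at hC hD hsup
  have hpos : 0 < Module.finrank 𝕜 ↥(C.mulVecLin.ker ⊓ D.mulVecLin.ker) := by
    simp only [Matrix.rank] at h
    omega
  obtain ⟨x, hx, hx0⟩ := (Submodule.ne_bot_iff _).mp (Submodule.one_le_finrank_iff.mp hpos)
  exact ⟨x, hx0, hx.1, hx.2⟩

variable {d e} in
lemma re_quadForm_ofSpectrum_mono (h : ∀ i, d i ≤ e i) (x : ι → 𝕜) :
    RCLike.re (star x ⬝ᵥ ofSpectrum U d *ᵥ x) ≤ RCLike.re (star x ⬝ᵥ ofSpectrum U e *ᵥ x) := by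
  have hpsd := (posSemidef_ofSpectrum U (d := e - d) fun i =>
    sub_nonneg.mpr (h i)).re_dotProduct_nonneg x
  calc RCLike.re (star x ⬝ᵥ ofSpectrum U d *ᵥ x)
      ≤ RCLike.re (star x ⬝ᵥ ofSpectrum U d *ᵥ x)
          + RCLike.re (star x ⬝ᵥ ofSpectrum U (e - d) *ᵥ x) := le_add_of_nonneg_right hpsd
    _ = RCLike.re (star x ⬝ᵥ ofSpectrum U e *ᵥ x) := by
      rw [← map_add, ← dotProduct_add, ← add_mulVec, ofSpectrum_add, add_sub_cancel]

lemma re_quadForm_ofSpectrum_const (t : ℝ) (x : ι → 𝕜) :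
    RCLike.re (star x ⬝ᵥ ofSpectrum U (fun _ => t) *ᵥ x) = t * RCLike.re (star x ⬝ᵥ x) := by
  rw [ofSpectrum_const, smul_mulVec, one_mulVec, dotProduct_smul, smul_eq_mul,
    RCLike.re_ofReal_mul]

variable {U d} in
lemma re_quadForm_ofSpectrum_le {t : ℝ} {x : ι → 𝕜}
    (hx : ofSpectrum U (fun i => max (d i - t) 0) *ᵥ x = 0) :
    RCLike.re (star x ⬝ᵥ ofSpectrum U d *ᵥ x) ≤ t * RCLike.re (star x ⬝ᵥ x) := by
  have hle := re_quadForm_ofSpectrum_mono U (d := d)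
    (e := (fun _ => t) + fun i => max (d i - t) 0)
    (fun i => by simp only [Pi.add_apply]; linarith [le_max_left (d i - t) 0]) x
  rwa [← ofSpectrum_add, add_mulVec, hx, add_zero, re_quadForm_ofSpectrum_const] at hle

variable {U d} in
lemma le_re_quadForm_ofSpectrum {t : ℝ} {x : ι → 𝕜}
    (hx : ofSpectrum U (fun i => max (t - d i) 0) *ᵥ x = 0) :
    t * RCLike.re (star x ⬝ᵥ x) ≤ RCLike.re (star x ⬝ᵥ ofSpectrum U d *ᵥ x) := by
  have hle := re_quadForm_ofSpectrum_mono U (d := fun _ => t)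
    (e := d + fun i => max (t - d i) 0)
    (fun i => by simp only [Pi.add_apply]; linarith [le_max_left (t - d i) 0]) x
  rwa [← ofSpectrum_add, add_mulVec, hx, add_zero, re_quadForm_ofSpectrum_const] at hle

lemma rank_ofSpectrum_max_sub_le (d e : ι → ℝ) :
    (ofSpectrum U fun i => max (d i - e i) 0).rank ≤ Nat.card {i // e i < d i} := by
  have hsupp (i : ι) (hi : max (d i - e i) 0 ≠ 0) : e i < d i := by
    by_contra hle
    exact hi (max_eq_right (by linarith))
  exact (rank_ofSpectrum_le U _).trans (Nat.card_le_card_of_injective (Subtype.map id hsupp)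
    (Subtype.map_injective hsupp Function.injective_id))

omit [DecidableEq ι] in
open scoped MatrixOrder in
lemma eq_of_mul_self_eq_of_posSemidef {M N : Matrix ι ι 𝕜} (hM : M.PosSemidef) (hN : N.PosSemidef)
    (h : M * M = N * N) : M = N :=
  (CFC.mul_self_eq_mul_self_iff M N hM.nonneg hN.nonneg).mp h

end Spectral

section SingularValues

open scoped Matrix.Norms.L2Operator

variable {n : ℕ} (M : Matrix (Fin n) (Fin n) 𝕜) (U : unitaryGroup (Fin n) 𝕜)

lemma sval_nonneg (i : ℕ) : 0 ≤ sval M i := by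
  unfold sval
  split_ifs <;> positivity

lemma sval_of_le {i : ℕ} (h : n ≤ i) : sval M i = 0 :=
  dif_neg h.not_gt

lemma sval_antitone : Antitone (sval M) := by
  intro i j hij
  by_cases hj : j < n
  · rw [sval, sval, dif_pos hj, dif_pos (hij.trans_lt hj)]
    exact Real.sqrt_le_sqrt (Tuple.monotone_sort (posSemidef_conjTranspose_mul_self M).1.eigenvalues
      (Fin.rev_le_rev.mpr hij))
  · rw [sval_of_le M (not_lt.mp hj)]
    exact sval_nonneg M i

/-- The columns of the unitary matrix `U` are right singular vectors of `M`, ordered by decreasing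
singular value. -/
def IsRightSingularBasis : Prop :=
  Mᴴ * M = ofSpectrum U fun i => sval M i ^ 2

lemma exists_isRightSingularBasis : ∃ U, IsRightSingularBasis M U := by
  have hM := posSemidef_conjTranspose_mul_self M
  obtain ⟨U, hU⟩ := exists_ofSpectrum_comp_equiv hM.1.eigenvectorUnitary hM.1.eigenvalues
    (Fin.revPerm.trans (Tuple.sort hM.1.eigenvalues))
  refine ⟨U, hM.1.spectral_theorem.trans (hU.symm.trans (congrArg _ ?_))⟩
  ext i
  simp only [sval, i.2, dif_pos, Real.sq_sqrt (hM.eigenvalues_nonneg _)]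
  rfl

variable {M U}

lemma IsRightSingularBasis.conjTranspose_mul_self_mul_ofSpectrum (hU : IsRightSingularBasis M U)
    (f : Fin n → ℝ) : (M * ofSpectrum U f)ᴴ * (M * ofSpectrum U f)
      = ofSpectrum U fun i => (f i * sval M i) ^ 2 := by
  rw [conjTranspose_mul, conjTranspose_ofSpectrum, mul_assoc, ← mul_assoc Mᴴ, hU, ofSpectrum_mul,
    ofSpectrum_mul]
  congr 1
  ext i
  simp only [Pi.mul_apply]
  ring

lemma IsRightSingularBasis.l2_opNorm_mul_ofSpectrum_le (hU : IsRightSingularBasis M U)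
    {f : Fin n → ℝ} {t : ℝ} (ht : 0 ≤ t) (hf : ∀ i, |f i * sval M i| ≤ t) :
    ‖M * ofSpectrum U f‖ ≤ t := by
  refine le_of_sq_le_sq ?_ ht
  rw [sq, ← l2_opNorm_conjTranspose_mul_self, hU.conjTranspose_mul_self_mul_ofSpectrum,
    l2_opNorm_ofSpectrum, pi_norm_le_iff_of_nonneg (sq_nonneg t)]
  intro i
  rw [Real.norm_eq_abs, abs_of_nonneg (sq_nonneg _)]
  exact sq_le_sq' (abs_le.mp (hf i)).1 (abs_le.mp (hf i)).2

lemma re_star_dotProduct_self {ι : Type*} [Fintype ι] (x : ι → 𝕜) :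
    RCLike.re (star x ⬝ᵥ x) = ‖WithLp.toLp 2 x‖ ^ 2 := by
  rw [← inner_self_eq_norm_sq (𝕜 := 𝕜), EuclideanSpace.inner_toLp_toLp, dotProduct_comm]

lemma re_quadForm_conjTranspose_mul_self {ι κ : Type*} [Fintype ι] [Fintype κ] (M : Matrix ι κ 𝕜)
    (x : κ → 𝕜) :
    RCLike.re (star x ⬝ᵥ (Mᴴ * M) *ᵥ x) = ‖WithLp.toLp 2 (M *ᵥ x)‖ ^ 2 := by
  rw [← re_star_dotProduct_self, ← mulVec_mulVec, dotProduct_mulVec, ← star_mulVec]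

lemma card_fin_subtype_le {p : Fin n → Prop} {s : Finset ℕ} (h : ∀ l, p l → (l : ℕ) ∈ s) :
    Nat.card {l // p l} ≤ s.card := by
  rw [← Fintype.card_coe s, ← Nat.card_eq_fintype_card]
  exact Nat.card_le_card_of_injective (Subtype.map Fin.val h)
    (Subtype.map_injective h Fin.val_injective)

lemma rank_ofSpectrum_ite_le (U : unitaryGroup (Fin n) 𝕜) (s : Finset ℕ) :
    (ofSpectrum U fun l => if (l : ℕ) ∈ s then 1 else 0).rank ≤ s.card :=
  (rank_ofSpectrum_le U _).trans
    (card_fin_subtype_le fun _ hl => (ite_ne_right_iff.mp hl).1)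

lemma rank_ofSpectrum_max_apply_sub_le (U : unitaryGroup (Fin n) 𝕜) {d : ℕ → ℝ} (hd : Antitone d)
    (i : ℕ) : (ofSpectrum U fun l => max (d i - d l) 0).rank ≤ n - (i + 1) := by
  rw [← Nat.card_Ico]
  refine (rank_ofSpectrum_max_sub_le U (fun _ => d i) fun l => d l).trans
    (card_fin_subtype_le fun l hl => Finset.mem_Ico.mpr ⟨?_, l.2⟩)
  by_contra hle
  exact hl.not_ge (hd (by omega))

lemma rank_ofSpectrum_max_sub_apply_le (U : unitaryGroup (Fin n) 𝕜) {d : ℕ → ℝ} (hd : Antitone d)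
    (i : ℕ) : (ofSpectrum U fun l => max (d l - d i) 0).rank ≤ i := by
  conv_rhs => rw [← Finset.card_range i]
  refine (rank_ofSpectrum_max_sub_le U (fun l => d l) fun _ => d i).trans
    (card_fin_subtype_le fun l hl => Finset.mem_range.mpr ?_)
  by_contra hle
  exact hl.not_ge (hd (by omega))

lemma sval_le_l2_opNorm_sub (M : Matrix (Fin n) (Fin n) 𝕜) {C : Matrix (Fin n) (Fin n) 𝕜} {i : ℕ}
    (hC : C.rank ≤ i) : sval M i ≤ ‖M - C‖ := by
  obtain hi | hi := le_or_gt n i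
  · exact (sval_of_le M hi).trans_le (norm_nonneg _)
  obtain ⟨U, hU⟩ := exists_isRightSingularBasis M
  have hsq : Antitone fun l => sval M l ^ 2 := fun _ l hl =>
    pow_le_pow_left₀ (sval_nonneg M l) (sval_antitone M hl) 2
  have hG := rank_ofSpectrum_max_apply_sub_le U hsq i
  obtain ⟨x, hx0, hCx, hGx⟩ := exists_ne_zero_mulVec_eq_zero_of_rank_add_lt
    (C := C) (by rw [Fintype.card_fin]; exact (add_le_add hC hG).trans_lt (by omega))
  have hx : 0 < ‖WithLp.toLp 2 x‖ := by simpa using hx0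
  have hle := le_re_quadForm_ofSpectrum hGx
  rw [← hU, re_quadForm_conjTranspose_mul_self, re_star_dotProduct_self, ← mul_pow] at hle
  have hMx : M *ᵥ x = (M - C) *ᵥ x := by rw [sub_mulVec, hCx, sub_zero]
  refine le_of_mul_le_mul_right ?_ hx
  calc sval M i * ‖WithLp.toLp 2 x‖
      ≤ ‖WithLp.toLp 2 ((M - C) *ᵥ x)‖ := hMx ▸ le_of_sq_le_sq hle (norm_nonneg _)
    _ ≤ ‖M - C‖ * ‖WithLp.toLp 2 x‖ := l2_opNorm_mulVec _ _

/-- The truncation of a singular value decomposition of `M` with right singular vectors `U` to the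
singular values whose index lies in `s`. -/
noncomputable def svdRestrict (M : Matrix (Fin n) (Fin n) 𝕜) (U : unitaryGroup (Fin n) 𝕜)
    (s : Finset ℕ) : Matrix (Fin n) (Fin n) 𝕜 :=
  M * ofSpectrum U fun l => if (l : ℕ) ∈ s then 1 else 0

lemma rank_svdRestrict_le (M : Matrix (Fin n) (Fin n) 𝕜) (U : unitaryGroup (Fin n) 𝕜)
    (s : Finset ℕ) : (svdRestrict M U s).rank ≤ s.card :=
  (rank_mul_le_right _ _).trans (rank_ofSpectrum_ite_le U s)

lemma svdRestrict_union (M : Matrix (Fin n) (Fin n) 𝕜) (U : unitaryGroup (Fin n) 𝕜)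
    {s t : Finset ℕ} (h : Disjoint s t) :
    svdRestrict M U (s ∪ t) = svdRestrict M U s + svdRestrict M U t := by
  rw [svdRestrict, svdRestrict, svdRestrict, ← mul_add, ofSpectrum_add]
  congr 2
  ext l
  by_cases hs : (l : ℕ) ∈ s
  · simp [hs, Finset.disjoint_left.mp h hs]
  · simp [hs]

lemma sub_svdRestrict (M : Matrix (Fin n) (Fin n) 𝕜) (U : unitaryGroup (Fin n) 𝕜) (s : Finset ℕ) :
    M - svdRestrict M U s = svdRestrict M U (Finset.range n \ s) := by
  have hone : (ofSpectrum U fun _ => 1) = (1 : Matrix (Fin n) (Fin n) 𝕜) := by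
    rw [ofSpectrum_const, RCLike.ofReal_one, one_smul]
  rw [sub_eq_iff_eq_add, svdRestrict, svdRestrict, ← mul_add, ofSpectrum_add]
  conv_lhs => rw [← mul_one M, ← hone]
  congr 2
  ext l
  by_cases hl : (l : ℕ) ∈ s <;> simp [hl]

lemma IsRightSingularBasis.l2_opNorm_svdRestrict_le (hU : IsRightSingularBasis M U) {s : Finset ℕ}
    {i : ℕ} (hs : ∀ l ∈ s, i ≤ l) : ‖svdRestrict M U s‖ ≤ sval M i := by
  refine hU.l2_opNorm_mul_ofSpectrum_le (sval_nonneg M i) fun l => ?_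
  split_ifs with hl
  · rw [one_mul, abs_of_nonneg (sval_nonneg M l)]
    exact sval_antitone M (hs l hl)
  · rw [zero_mul, abs_zero]
    exact sval_nonneg M i

lemma sval_add_le_sval_sub (M : Matrix (Fin n) (Fin n) 𝕜) {C : Matrix (Fin n) (Fin n) 𝕜} {r : ℕ}
    (hC : C.rank ≤ r) (i : ℕ) : sval M (r + i) ≤ sval (M - C) i := by
  obtain ⟨U, hU⟩ := exists_isRightSingularBasis (M - C)
  have hD := rank_svdRestrict_le (M - C) U (Finset.range i)
  rw [Finset.card_range] at hD
  calc sval M (r + i)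
      ≤ ‖M - (C + svdRestrict (M - C) U (Finset.range i))‖ :=
        sval_le_l2_opNorm_sub M ((rank_add_le C _).trans (add_le_add hC hD))
    _ = ‖svdRestrict (M - C) U (Finset.range n \ Finset.range i)‖ := by
        rw [← sub_sub, sub_svdRestrict]
    _ ≤ sval (M - C) i := hU.l2_opNorm_svdRestrict_le fun l hl => by
        simpa using (Finset.mem_sdiff.mp hl).2

lemma IsRightSingularBasis.sval_sub_svdRestrict_le (hU : IsRightSingularBasis M U) (r i : ℕ) :
    sval (M - svdRestrict M U (Finset.range r)) i ≤ sval M (r + i) := by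
  have hD := rank_svdRestrict_le M U (Finset.Ico r (r + i))
  rw [Nat.card_Ico, Nat.add_sub_cancel_left] at hD
  calc sval (M - svdRestrict M U (Finset.range r)) i
      ≤ ‖M - svdRestrict M U (Finset.range r) - svdRestrict M U (Finset.Ico r (r + i))‖ :=
        sval_le_l2_opNorm_sub _ hD
    _ = ‖svdRestrict M U (Finset.range n \ Finset.range (r + i))‖ := by
        rw [sub_sub, ← svdRestrict_union M U (Finset.disjoint_left.mpr fun l hl => by
          simp only [Finset.mem_range, Finset.mem_Ico] at *; omega), sub_svdRestrict]
        congr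
        ext l
        simp only [Finset.mem_union, Finset.mem_range, Finset.mem_Ico]
        omega
    _ ≤ sval M (r + i) := hU.l2_opNorm_svdRestrict_le fun l hl => by
        simpa using (Finset.mem_sdiff.mp hl).2

end SingularValues

section SchattenNorms

variable {n : ℕ} {M N : Matrix (Fin n) (Fin n) 𝕜} {U : unitaryGroup (Fin n) 𝕜}

lemma schatten_mono (p : ℝ≥0∞) (h : ∀ i, sval M i ≤ sval N i) : schatten p M ≤ schatten p N := by
  unfold schatten
  split_ifs
  · exact h 0
  · have hM := sval_nonneg M
    gcongr with i
    · exact Finset.sum_nonneg fun i _ => Real.rpow_nonneg (hM i) _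
    · exact hM i
    · exact h i

lemma IsRightSingularBasis.sval_sub_svdRestrict (hU : IsRightSingularBasis M U) (r i : ℕ) :
    sval (M - svdRestrict M U (Finset.range r)) i = sval M (r + i) :=
  (hU.sval_sub_svdRestrict_le r i).antisymm
    (sval_add_le_sval_sub M ((rank_svdRestrict_le M U _).trans_eq (Finset.card_range r)) i)

lemma IsRightSingularBasis.isBestRankApprox_svdRestrict (hU : IsRightSingularBasis M U) (r : ℕ) :
    IsBestRankApprox M (svdRestrict M U (Finset.range r)) r :=
  ⟨(rank_svdRestrict_le M U _).trans_eq (Finset.card_range r), fun p _ _ hC =>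
    schatten_mono p fun i => (hU.sval_sub_svdRestrict r i).trans_le (sval_add_le_sval_sub M hC i)⟩

lemma isBestRankApprox_truncate (M : Matrix (Fin n) (Fin n) 𝕜) (r : ℕ) :
    IsBestRankApprox M (truncate M r) r := by
  obtain ⟨U, hU⟩ := exists_isRightSingularBasis M
  have h : ∃ B, IsBestRankApprox M B r := ⟨_, hU.isBestRankApprox_svdRestrict r⟩
  rw [truncate, dif_pos h]
  exact h.choose_spec

lemma IsRightSingularBasis.schatten_sub_svdRestrict (hU : IsRightSingularBasis M U) (r : ℕ)
    {p : ℝ≥0∞} (hp : p ≠ 0) :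
    schatten p (M - svdRestrict M U (Finset.range r)) = tailNorm p M r := by
  unfold schatten tailNorm
  simp only [hU.sval_sub_svdRestrict, add_zero]
  split_ifs with hp'
  · rfl
  congr 1
  rw [Finset.sum_Ico_eq_sum_range]
  refine (Finset.sum_subset (Finset.range_subset_range.mpr (Nat.sub_le n r)) fun i _ hi => ?_).symm
  rw [sval_of_le M (by rw [Finset.mem_range] at hi; omega),
    Real.zero_rpow (ENNReal.toReal_ne_zero.mpr ⟨hp, hp'⟩)]

lemma schatten_sub_truncate (M : Matrix (Fin n) (Fin n) 𝕜) (r : ℕ) {p : ℝ≥0∞} (hp : 1 ≤ p) :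
    schatten p (M - truncate M r) = tailNorm p M r := by
  obtain ⟨U, hU⟩ := exists_isRightSingularBasis M
  have hT := isBestRankApprox_truncate M r
  have hS := hU.isBestRankApprox_svdRestrict r
  rw [← hU.schatten_sub_svdRestrict r (one_pos.trans_le hp).ne']
  exact (hT.2 p hp _ hS.1).antisymm (hS.2 p hp _ hT.1)

lemma schatten_one (M : Matrix (Fin n) (Fin n) 𝕜) :
    schatten 1 M = ∑ i ∈ Finset.range n, sval M i := by
  simp [schatten]

lemma schatten_one_nonneg (M : Matrix (Fin n) (Fin n) 𝕜) : 0 ≤ schatten 1 M :=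
  (schatten_one M).symm ▸ Finset.sum_nonneg fun i _ => sval_nonneg M i

lemma tailNorm_one (M : Matrix (Fin n) (Fin n) 𝕜) (r : ℕ) :
    tailNorm 1 M r = ∑ i ∈ Finset.Ico r n, sval M i := by
  simp [tailNorm]

lemma IsRightSingularBasis.eq_ofSpectrum (hU : IsRightSingularBasis M U) (hM : M.PosSemidef) :
    M = ofSpectrum U fun i => sval M i := by
  refine eq_of_mul_self_eq_of_posSemidef hM (posSemidef_ofSpectrum U fun i => sval_nonneg M i) ?_
  rw [ofSpectrum_mul]
  calc M * M = Mᴴ * M := by rw [hM.1]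
    _ = ofSpectrum U fun i => sval M i ^ 2 := hU
    _ = _ := congrArg _ (funext fun i => sq _)

lemma trace_eq_schatten_one (hM : M.PosSemidef) : M.trace = (schatten 1 M : 𝕜) := by
  obtain ⟨U, hU⟩ := exists_isRightSingularBasis M
  conv_lhs => rw [hU.eq_ofSpectrum hM]
  rw [trace_ofSpectrum, schatten_one, Finset.sum_range]

lemma sval_mono (hM : M.PosSemidef) (hN : (N - M).PosSemidef) (i : ℕ) : sval M i ≤ sval N i := by
  obtain hi | hi := le_or_gt n i
  · exact (sval_of_le M hi).trans_le (sval_nonneg N i)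
  have hN' : N.PosSemidef := by simpa using hM.add hN
  obtain ⟨V, hV⟩ := exists_isRightSingularBasis M
  obtain ⟨W, hW⟩ := exists_isRightSingularBasis N
  have hGM := rank_ofSpectrum_max_apply_sub_le V (sval_antitone M) i
  have hGN := rank_ofSpectrum_max_sub_apply_le W (sval_antitone N) i
  obtain ⟨x, hx0, hMx, hNx⟩ := exists_ne_zero_mulVec_eq_zero_of_rank_add_lt
    (by rw [Fintype.card_fin]; exact (add_le_add hGM hGN).trans_lt (by omega))
  have hx : 0 < RCLike.re (star x ⬝ᵥ x) := by
    rw [re_star_dotProduct_self]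
    have : WithLp.toLp 2 x ≠ 0 := by simpa using hx0
    positivity
  refine le_of_mul_le_mul_right ?_ hx
  calc sval M i * RCLike.re (star x ⬝ᵥ x)
      ≤ RCLike.re (star x ⬝ᵥ M *ᵥ x) := by
        conv_rhs => rw [hV.eq_ofSpectrum hM]
        exact le_re_quadForm_ofSpectrum hMx
    _ ≤ RCLike.re (star x ⬝ᵥ N *ᵥ x) := by
        have := hN.re_dotProduct_nonneg x
        rw [sub_mulVec, dotProduct_sub, map_sub] at this
        linarith
    _ ≤ sval N i * RCLike.re (star x ⬝ᵥ x) := by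
        conv_lhs => rw [hW.eq_ofSpectrum hN']
        exact re_quadForm_ofSpectrum_le hNx

open scoped Matrix.Norms.L2Operator

lemma norm_col_le_l2_opNorm {ι κ : Type*} [Fintype ι] [Fintype κ] [DecidableEq κ]
    (K : Matrix ι κ 𝕜) (i : κ) :
    ‖WithLp.toLp 2 (K.col i)‖ ≤ ‖K‖ := by
  have h := l2_opNorm_mulVec K (EuclideanSpace.single i 1)
  rwa [PiLp.norm_single, norm_one, mul_one, PiLp.ofLp_single, mulVec_single_one] at h

lemma IsRightSingularBasis.norm_col_mul (hU : IsRightSingularBasis M U) (i : Fin n) :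
    ‖WithLp.toLp 2 ((M * (U : Matrix (Fin n) (Fin n) 𝕜)).col i)‖ = sval M i := by
  have hdiag : (M * (U : Matrix (Fin n) (Fin n) 𝕜))ᴴ * (M * (U : Matrix (Fin n) (Fin n) 𝕜))
      = diagonal fun l : Fin n => ((sval M l ^ 2 : ℝ) : 𝕜) := by
    have hUU := mem_unitaryGroup_iff'.mp U.2
    rw [star_eq_conjTranspose] at hUU
    rw [conjTranspose_mul, mul_assoc, ← mul_assoc Mᴴ, hU, ofSpectrum_eq, mul_assoc, hUU, mul_one,
      ← mul_assoc, hUU, one_mul]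
  rw [← sq_eq_sq₀ (norm_nonneg _) (sval_nonneg M i), ← re_star_dotProduct_self]
  exact (congrArg RCLike.re (congrFun (congrFun hdiag i) i)).trans
    (by rw [diagonal_apply_eq, RCLike.ofReal_re])

lemma trace_conjTranspose_mul_eq_sum_inner {ι κ : Type*} [Fintype ι] [Fintype κ]
    (K M : Matrix ι κ 𝕜) :
    (Kᴴ * M).trace = ∑ i, inner 𝕜 (WithLp.toLp 2 (K.col i)) (WithLp.toLp 2 (M.col i)) := by
  simp only [EuclideanSpace.inner_toLp_toLp, dotProduct_comm _ (star _)]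
  rfl

lemma re_trace_conjTranspose_mul_le (K M : Matrix (Fin n) (Fin n) 𝕜) :
    RCLike.re (Kᴴ * M).trace ≤ ‖K‖ * schatten 1 M := by
  obtain ⟨U, hU⟩ := exists_isRightSingularBasis M
  have htrace : (Kᴴ * M).trace = ((K * (U : Matrix (Fin n) (Fin n) 𝕜))ᴴ * (M * U)).trace := by
    rw [conjTranspose_mul, mul_assoc, trace_mul_comm (U : Matrix (Fin n) (Fin n) 𝕜)ᴴ, mul_assoc,
      mul_assoc, ← star_eq_conjTranspose (U : Matrix (Fin n) (Fin n) 𝕜),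
      mem_unitaryGroup_iff.mp U.2, mul_one]
  rw [trace_conjTranspose_mul_eq_sum_inner (K * _)] at htrace
  rw [htrace, map_sum, schatten_one, Finset.sum_range, Finset.mul_sum]
  refine Finset.sum_le_sum fun i _ => (re_inner_le_norm _ _).trans ?_
  rw [hU.norm_col_mul]
  refine mul_le_mul_of_nonneg_right ((norm_col_le_l2_opNorm _ i).trans_eq ?_) (sval_nonneg M i)
  exact CStarRing.norm_mul_coe_unitary K U

lemma exists_re_trace_conjTranspose_mul_eq (M : Matrix (Fin n) (Fin n) 𝕜) :
    ∃ K : Matrix (Fin n) (Fin n) 𝕜, ‖K‖ ≤ 1 ∧ RCLike.re (Kᴴ * M).trace = schatten 1 M := by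
  obtain ⟨U, hU⟩ := exists_isRightSingularBasis M
  -- The partial isometry of the polar decomposition; zero singular values are covered by `0⁻¹ = 0`.
  refine ⟨M * ofSpectrum U fun i => (sval M i)⁻¹,
    hU.l2_opNorm_mul_ofSpectrum_le zero_le_one fun i => ?_, ?_⟩
  · obtain h | h := eq_or_ne (sval M i) 0 <;> simp [h]
  · rw [conjTranspose_mul, conjTranspose_ofSpectrum, mul_assoc, hU, ofSpectrum_mul,
      trace_ofSpectrum, RCLike.ofReal_re, schatten_one, Finset.sum_range]
    refine Finset.sum_congr rfl fun i _ => ?_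
    obtain h | h := eq_or_ne (sval M i) 0 <;> simp [h, sq]

lemma schatten_one_add_le (M N : Matrix (Fin n) (Fin n) 𝕜) :
    schatten 1 (M + N) ≤ schatten 1 M + schatten 1 N := by
  obtain ⟨K, hK, hKeq⟩ := exists_re_trace_conjTranspose_mul_eq (M + N)
  have hle (L : Matrix (Fin n) (Fin n) 𝕜) : RCLike.re (Kᴴ * L).trace ≤ schatten 1 L :=
    (re_trace_conjTranspose_mul_le K L).trans (mul_le_of_le_one_left (schatten_one_nonneg L) hK)
  rw [← hKeq, mul_add, trace_add, map_add]
  exact add_le_add (hle M) (hle N)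

end SchattenNorms

section Nystrom

variable {n k : ℕ}

lemma isMoorePenrose_ofSpectrum (U : unitaryGroup (Fin k) 𝕜) (d : Fin k → ℝ) :
    IsMoorePenrose (ofSpectrum U d) (ofSpectrum U d⁻¹) := by
  simp only [IsMoorePenrose, ofSpectrum_mul, conjTranspose_ofSpectrum, and_true]
  constructor <;> congr 1 <;> ext i <;> obtain h | h := eq_or_ne (d i) 0 <;> simp [h]

lemma mul_pinv_mul_self {S : Matrix (Fin k) (Fin k) 𝕜} (hS : S.IsHermitian) :
    S * pinv S * S = S := by
  have hS' : S = ofSpectrum hS.eigenvectorUnitary hS.eigenvalues := hS.spectral_theorem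
  have h : ∃ X, IsMoorePenrose S X :=
    ⟨_, (congrArg (IsMoorePenrose · _) hS').mpr (isMoorePenrose_ofSpectrum _ _)⟩
  rw [pinv, dif_pos h]
  exact h.choose_spec.1

/-- The minimizer `(Ωᴴ A Ω)† Ωᴴ A` of `Y ↦ tr ((1 - Ω Y)ᴴ A (1 - Ω Y))`, so that the Nyström
approximation is `A Ω (nystromCoeff A Ω)`. -/
noncomputable def nystromCoeff (A : Matrix (Fin n) (Fin n) 𝕜) (Ω : Matrix (Fin n) (Fin k) 𝕜) :
    Matrix (Fin k) (Fin n) 𝕜 :=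
  pinv (Ωᴴ * A * Ω) * (Ωᴴ * A)

lemma nystrom_eq (A : Matrix (Fin n) (Fin n) 𝕜) (Ω : Matrix (Fin n) (Fin k) 𝕜) :
    nystrom A Ω = A * Ω * nystromCoeff A Ω := by
  simp only [nystrom, nystromCoeff, Matrix.mul_assoc]

variable {A : Matrix (Fin n) (Fin n) 𝕜}

open scoped MatrixOrder in
lemma conjTranspose_mul_mul_nystromCoeff (hA : A.PosSemidef) (Ω : Matrix (Fin n) (Fin k) 𝕜) :
    Ωᴴ * A * Ω * nystromCoeff A Ω = Ωᴴ * A := by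
  obtain ⟨B, hB⟩ := CStarAlgebra.nonneg_iff_eq_star_mul_self.mp hA.nonneg
  rw [star_eq_conjTranspose] at hB
  have hS : Ωᴴ * A * Ω = (B * Ω)ᴴ * (B * Ω) := by
    simp only [hB, conjTranspose_mul, Matrix.mul_assoc]
  -- `(S S† - 1) (B Ω)ᴴ (B Ω) = 0` with `S = (B Ω)ᴴ (B Ω)`, and `B Ω` on the right cancels.
  have hker : (Ωᴴ * A * Ω * pinv (Ωᴴ * A * Ω) - 1) * (B * Ω)ᴴ = 0 := by
    rw [← mul_conjTranspose_mul_self_eq_zero (B * Ω), ← hS, Matrix.sub_mul, Matrix.one_mul,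
      sub_eq_zero]
    exact mul_pinv_mul_self (hA.conjTranspose_mul_mul_same Ω).1
  rw [Matrix.sub_mul, Matrix.one_mul, sub_eq_zero] at hker
  have hA' : Ωᴴ * A = (B * Ω)ᴴ * B := by rw [hB, conjTranspose_mul, Matrix.mul_assoc]
  rw [nystromCoeff, hA', ← Matrix.mul_assoc, ← Matrix.mul_assoc, ← hA', hker, ← hA']

lemma conjTranspose_nystromCoeff_mul (hA : A.PosSemidef) (Ω : Matrix (Fin n) (Fin k) 𝕜) :
    (nystromCoeff A Ω)ᴴ * (Ωᴴ * A * Ω) = A * Ω := by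
  simpa only [conjTranspose_mul, conjTranspose_conjTranspose, hA.1.eq, Matrix.mul_assoc] using
    congrArg conjTranspose (conjTranspose_mul_mul_nystromCoeff hA Ω)

lemma nystrom_eq_conjTranspose_mul_mul (hA : A.PosSemidef) (Ω : Matrix (Fin n) (Fin k) 𝕜) :
    nystrom A Ω = (nystromCoeff A Ω)ᴴ * (Ωᴴ * A * Ω) * nystromCoeff A Ω := by
  rw [conjTranspose_nystromCoeff_mul hA, nystrom_eq]

lemma posSemidef_nystrom (hA : A.PosSemidef) (Ω : Matrix (Fin n) (Fin k) 𝕜) :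
    (nystrom A Ω).PosSemidef := by
  rw [nystrom_eq_conjTranspose_mul_mul hA]
  exact (hA.conjTranspose_mul_mul_same Ω).conjTranspose_mul_mul_same _

-- Completing the square in `Y`.
lemma conjTranspose_one_sub_mul_mul_one_sub (hA : A.PosSemidef) (Ω : Matrix (Fin n) (Fin k) 𝕜)
    (Y : Matrix (Fin k) (Fin n) 𝕜) :
    (1 - Ω * Y)ᴴ * A * (1 - Ω * Y) = A - nystrom A Ω +
      (Y - nystromCoeff A Ω)ᴴ * (Ωᴴ * A * Ω) * (Y - nystromCoeff A Ω) := by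
  calc (1 - Ω * Y)ᴴ * A * (1 - Ω * Y)
      = A - A * Ω * Y - Yᴴ * (Ωᴴ * A) + Yᴴ * (Ωᴴ * A * Ω) * Y := by
        simp only [conjTranspose_sub, conjTranspose_one, conjTranspose_mul, Matrix.sub_mul,
          Matrix.mul_sub, Matrix.one_mul, Matrix.mul_one, Matrix.mul_assoc]
        abel
    _ = _ := by
        rw [nystrom_eq, conjTranspose_sub, Matrix.sub_mul, conjTranspose_nystromCoeff_mul hA,
          Matrix.sub_mul, Matrix.mul_sub, Matrix.mul_sub, Matrix.mul_assoc Yᴴ _ (nystromCoeff A Ω),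
          conjTranspose_mul_mul_nystromCoeff hA]
        abel

lemma sub_nystrom_eq (hA : A.PosSemidef) (Ω : Matrix (Fin n) (Fin k) 𝕜) :
    A - nystrom A Ω =
      (1 - Ω * nystromCoeff A Ω)ᴴ * A * (1 - Ω * nystromCoeff A Ω) := by
  rw [conjTranspose_one_sub_mul_mul_one_sub hA, sub_self, Matrix.mul_zero, add_zero]

lemma posSemidef_sub_nystrom (hA : A.PosSemidef) (Ω : Matrix (Fin n) (Fin k) 𝕜) :
    (A - nystrom A Ω).PosSemidef := by
  rw [sub_nystrom_eq hA]
  exact hA.conjTranspose_mul_mul_same _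

lemma schatten_one_sub_nystrom (hA : A.PosSemidef) (Ω : Matrix (Fin n) (Fin k) 𝕜) :
    schatten 1 (A - nystrom A Ω) = RCLike.re (A - nystrom A Ω).trace := by
  rw [trace_eq_schatten_one (posSemidef_sub_nystrom hA Ω), RCLike.ofReal_re]

lemma re_trace_sub_nystrom_le (hA : A.PosSemidef) (Ω : Matrix (Fin n) (Fin k) 𝕜)
    (Y : Matrix (Fin k) (Fin n) 𝕜) :
    RCLike.re (A - nystrom A Ω).trace ≤ RCLike.re ((1 - Ω * Y)ᴴ * A * (1 - Ω * Y)).trace := by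
  rw [conjTranspose_one_sub_mul_mul_one_sub hA, trace_add, map_add, le_add_iff_nonneg_right]
  exact (RCLike.nonneg_iff.mp
    ((hA.conjTranspose_mul_mul_same Ω).conjTranspose_mul_mul_same _).trace_nonneg).1

lemma nystrom_unitary_conj {V : Matrix (Fin n) (Fin n) 𝕜} (hV : Vᴴ * V = 1)
    (D : Matrix (Fin n) (Fin n) 𝕜) (Ω : Matrix (Fin n) (Fin k) 𝕜) :
    nystrom (V * D * Vᴴ) (V * Ω) = V * nystrom D Ω * Vᴴ := by
  have hcancel {m : ℕ} (M : Matrix (Fin n) (Fin m) 𝕜) : Vᴴ * (V * M) = M := by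
    rw [← Matrix.mul_assoc, hV, Matrix.one_mul]
  simp only [nystrom, conjTranspose_mul, Matrix.mul_assoc, hcancel]

-- The truncation error is controlled by `A` itself because `nystrom A Ω ≤ A` in the Loewner order.
lemma schatten_one_sub_truncate_nystrom_le (hA : A.PosSemidef) (Ω : Matrix (Fin n) (Fin k) 𝕜)
    (r : ℕ) :
    schatten 1 (A - truncate (nystrom A Ω) r) ≤
      schatten 1 (A - truncate A r) + schatten 1 (A - nystrom A Ω) := by
  have htail : tailNorm 1 (nystrom A Ω) r ≤ tailNorm 1 A r := by
    rw [tailNorm_one, tailNorm_one]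
    exact Finset.sum_le_sum fun i _ =>
      sval_mono (posSemidef_nystrom hA Ω) (posSemidef_sub_nystrom hA Ω) i
  calc schatten 1 (A - truncate (nystrom A Ω) r)
      = schatten 1 ((nystrom A Ω - truncate (nystrom A Ω) r) + (A - nystrom A Ω)) := by
        congr 1; abel
    _ ≤ schatten 1 (nystrom A Ω - truncate (nystrom A Ω) r) + schatten 1 (A - nystrom A Ω) :=
        schatten_one_add_le _ _
    _ ≤ _ := by
        rw [schatten_sub_truncate _ _ le_rfl, schatten_sub_truncate _ _ le_rfl]
        gcongr

end Nystrom

section StdGaussian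

open scoped RealInnerProductSpace
open InnerProductSpace Module

lemma integral_exp_neg_mul_sq_gaussianReal {t : ℝ} (ht : 0 ≤ t) :
    ∫ x, Real.exp (-(t * x ^ 2)) ∂gaussianReal 0 1 = (1 + 2 * t) ^ (-(1 / 2) : ℝ) := by
  have hdensity (x : ℝ) : gaussianPDFReal 0 1 x • Real.exp (-(t * x ^ 2)) =
      (√(2 * Real.pi))⁻¹ * Real.exp (-((1 + 2 * t) / 2) * x ^ 2) := by
    rw [gaussianPDFReal, smul_eq_mul, mul_assoc, ← Real.exp_add]
    simp only [NNReal.coe_one, mul_one, sub_zero]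
    ring_nf
  rw [integral_gaussianReal_eq_integral_smul one_ne_zero]
  simp_rw [hdensity]
  rw [integral_const_mul, integral_gaussian, Real.rpow_neg (by linarith), ← Real.sqrt_eq_rpow,
    ← Real.sqrt_inv, ← Real.sqrt_inv, ← Real.sqrt_mul (by positivity)]
  congr 1
  field_simp

lemma lintegral_exp_neg_mul_Ioi {a : ℝ} (ha : 0 ≤ a) :
    ∫⁻ t in Set.Ioi (0 : ℝ), ENNReal.ofReal (Real.exp (-(a * t))) = (ENNReal.ofReal a)⁻¹ := by
  rcases ha.eq_or_lt with rfl | ha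
  · simp
  · simp_rw [← neg_mul]
    rw [← ofReal_integral_eq_lintegral_ofReal
      (integrableOn_exp_mul_Ioi (neg_lt_zero.mpr ha) 0) (ae_of_all _ fun t => (Real.exp_pos _).le),
      integral_exp_mul_Ioi (neg_lt_zero.mpr ha), ← ENNReal.ofReal_inv_of_pos ha]
    simp

lemma lintegral_one_add_two_mul_rpow_Ioi {p : ℝ} (hp : 1 < p) :
    ∫⁻ t in Set.Ioi (0 : ℝ), ENNReal.ofReal ((1 + 2 * t) ^ (-p)) =
      ENNReal.ofReal (1 / (2 * p - 2)) := by
  set G : ℝ → ℝ := fun t => (1 + 2 * t) ^ (1 - p) / (2 * (1 - p))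
  have hderiv : ∀ t ∈ Set.Ici (0 : ℝ), HasDerivAt G ((1 + 2 * t) ^ (-p)) t := fun t ht => by
    have hlin : HasDerivAt (fun t : ℝ => 1 + 2 * t) 2 t := by
      simpa using ((hasDerivAt_id t).const_mul 2).const_add 1
    have ht' : 1 + 2 * t ≠ 0 := by linarith [Set.mem_Ici.mp ht]
    refine ((hlin.rpow_const (p := 1 - p) (Or.inl ht')).div_const _).congr_deriv ?_
    have hp' : 1 - p ≠ 0 := by linarith
    rw [sub_right_comm, sub_self, zero_sub]
    field_simp
  have hnonneg : ∀ t ∈ Set.Ioi (0 : ℝ), 0 ≤ (1 + 2 * t) ^ (-p) := fun t ht =>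
    Real.rpow_nonneg (by linarith [Set.mem_Ioi.mp ht]) _
  have hlim : Filter.Tendsto G Filter.atTop (nhds 0) := by
    have hlin : Filter.Tendsto (fun t : ℝ => 1 + 2 * t) Filter.atTop Filter.atTop :=
      Filter.tendsto_atTop_add_const_left _ _ (Filter.tendsto_id.const_mul_atTop two_pos)
    simpa [G] using
      ((tendsto_rpow_neg_atTop (sub_pos.mpr hp)).comp hlin).div_const (2 * (1 - p))
  rw [← ofReal_integral_eq_lintegral_ofReal
    (integrableOn_Ioi_deriv_of_nonneg' hderiv hnonneg hlim)
    ((ae_restrict_iff' measurableSet_Ioi).mpr (ae_of_all _ hnonneg)),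
    integral_Ioi_of_hasDerivAt_of_nonneg' hderiv hnonneg hlim]
  simp only [G, mul_zero, add_zero, Real.one_rpow, zero_sub]
  rw [← div_neg]
  ring_nf

variable {E F : Type*} [NormedAddCommGroup E] [InnerProductSpace ℝ E] [FiniteDimensional ℝ E]
  [MeasurableSpace E] [BorelSpace E] [NormedAddCommGroup F] [InnerProductSpace ℝ F]
  [FiniteDimensional ℝ F] [MeasurableSpace F] [BorelSpace F]

lemma map_stdGaussian_of_norm_adjoint (L : E →L[ℝ] F)
    (hL : ∀ y, ‖ContinuousLinearMap.adjoint L y‖ = ‖y‖) :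
    (stdGaussian E).map L = stdGaussian F := by
  refine Measure.ext_of_charFun (funext fun y => ?_)
  have hinner (x : E) : ⟪L x, y⟫ = ⟪x, ContinuousLinearMap.adjoint L y⟫ :=
    (ContinuousLinearMap.adjoint_inner_right L x y).symm
  rw [charFun_apply, integral_map L.continuous.aemeasurable (by fun_prop)]
  simp_rw [hinner, ← charFun_apply, charFun_stdGaussian, hL]

lemma map_orthogonalProjectionOnto_stdGaussian (K : Submodule ℝ E) :
    (stdGaussian E).map K.orthogonalProjectionOnto = stdGaussian K :=
  map_stdGaussian_of_norm_adjoint _ fun y => by simp [K.adjoint_orthogonalProjectionOnto]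

lemma ae_notMem_stdGaussian {K : Submodule ℝ E} (hK : K ≠ ⊤) : ∀ᵐ x ∂stdGaussian E, x ∉ K := by
  obtain ⟨v, hvK, hv⟩ := (Submodule.ne_bot_iff _).mp (mt Submodule.orthogonal_eq_bot_iff.mp hK)
  have hlaw := IsGaussian.map_eq_gaussianReal (μ := stdGaussian E) (innerSL ℝ v)
  have : NullSingletonClass ((stdGaussian E).map (innerSL ℝ v)) := by
    rw [hlaw, variance_dual_stdGaussian, innerSL_apply_norm]
    exact nullSingletonClass_gaussianReal (by positivity)
  have hae : ∀ᵐ x ∂stdGaussian E, ⟪v, x⟫ ≠ 0 :=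
    ae_of_ae_map (f := innerSL ℝ v) (by fun_prop) (Measure.ae_ne _ 0)
  filter_upwards [hae] with x hx hxK using hx (Submodule.inner_left_of_mem_orthogonal hxK hvK)

lemma lintegral_inner_sq_stdGaussian (z : E) :
    ∫⁻ x, ENNReal.ofReal (⟪z, x⟫ ^ 2) ∂stdGaussian E = ENNReal.ofReal (‖z‖ ^ 2) := by
  have hvar := variance_dual_stdGaussian (innerSL ℝ z)
  rw [variance_of_integral_eq_zero (by fun_prop) (integral_strongDual_stdGaussian _),
    innerSL_apply_norm] at hvar
  rw [← hvar]
  exact (ofReal_integral_eq_lintegral_ofReal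
    (IsGaussian.memLp_dual _ (innerSL ℝ z) 2 (by simp)).integrable_sq
    (ae_of_all _ fun x => sq_nonneg _)).symm

lemma integral_exp_neg_mul_norm_sq_stdGaussian {t : ℝ} (ht : 0 ≤ t) :
    ∫ x, Real.exp (-(‖x‖ ^ 2 * t)) ∂stdGaussian E =
      (1 + 2 * t) ^ (-(finrank ℝ E / 2) : ℝ) := by
  have hprod (x : Fin (finrank ℝ E) → ℝ) :
      Real.exp (-(‖∑ i, x i • stdOrthonormalBasis ℝ E i‖ ^ 2 * t)) =
        ∏ i, Real.exp (-(t * x i ^ 2)) := by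
    rw [← (stdOrthonormalBasis ℝ E).sum_sq_norm_inner_right, ← Real.exp_sum, Finset.sum_mul,
      ← Finset.sum_neg_distrib]
    simp_rw [(stdOrthonormalBasis ℝ E).orthonormal.inner_right_fintype, Real.norm_eq_abs, sq_abs,
      mul_comm]
  rw [stdGaussian, integral_map (Measurable.aemeasurable (by fun_prop)) (by fun_prop)]
  simp_rw [hprod]
  rw [integral_fintype_prod_eq_prod (f := fun _ x => Real.exp (-(t * x ^ 2)))]
  simp_rw [integral_exp_neg_mul_sq_gaussianReal ht, Finset.prod_const, Finset.card_univ,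
    Fintype.card_fin]
  rw [← Real.rpow_natCast, ← Real.rpow_mul (by positivity)]
  ring_nf

-- Laplace transform: `‖x‖⁻² = ∫₀^∞ exp (-t ‖x‖²) dt`, and `𝔼 exp (-t ‖x‖²) = (1 + 2 t) ^ (-d / 2)`.
lemma lintegral_inv_norm_sq_stdGaussian (hE : 3 ≤ finrank ℝ E) :
    ∫⁻ x, (ENNReal.ofReal (‖x‖ ^ 2))⁻¹ ∂stdGaussian E =
      ENNReal.ofReal (1 / (finrank ℝ E - 2)) := by
  have hE' : (3 : ℝ) ≤ finrank ℝ E := by exact_mod_cast hE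
  calc ∫⁻ x, (ENNReal.ofReal (‖x‖ ^ 2))⁻¹ ∂stdGaussian E
      = ∫⁻ x, (∫⁻ t in Set.Ioi (0 : ℝ), ENNReal.ofReal (Real.exp (-(‖x‖ ^ 2 * t))))
          ∂stdGaussian E := by
        simp_rw [lintegral_exp_neg_mul_Ioi (sq_nonneg _)]
    _ = ∫⁻ t in Set.Ioi (0 : ℝ), ∫⁻ x, ENNReal.ofReal (Real.exp (-(‖x‖ ^ 2 * t)))
          ∂stdGaussian E :=
        lintegral_lintegral_swap (by unfold Function.uncurry; fun_prop)
    _ = ∫⁻ t in Set.Ioi (0 : ℝ), ENNReal.ofReal ((1 + 2 * t) ^ (-(finrank ℝ E / 2) : ℝ)) := by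
        refine setLIntegral_congr_fun measurableSet_Ioi fun t (ht : 0 < t) => ?_
        have hbound (x : E) : ‖Real.exp (-(‖x‖ ^ 2 * t))‖ ≤ 1 := by
          rw [Real.norm_of_nonneg (Real.exp_pos _).le, Real.exp_le_one_iff, neg_nonpos]
          positivity
        rw [← integral_exp_neg_mul_norm_sq_stdGaussian ht.le, ofReal_integral_eq_lintegral_ofReal
          (.of_bound (by fun_prop) 1 (ae_of_all _ hbound)) (ae_of_all _ fun x => by positivity)]
    _ = ENNReal.ofReal (1 / (finrank ℝ E - 2)) := by
        rw [lintegral_one_add_two_mul_rpow_Ioi (by linarith), mul_div_cancel₀ _ two_ne_zero]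

end StdGaussian

section Resampling

variable {ι : Type*} [Fintype ι] {X : ι → Type*} [∀ i, MeasurableSpace (X i)]
  {μ : ∀ i, Measure (X i)} [∀ i, IsProbabilityMeasure (μ i)]

lemma lintegral_pi_eq_lintegral_lintegral_update (i : ι) {f : (∀ i, X i) → ℝ≥0∞}
    (hf : Measurable f) :
    ∫⁻ w, f w ∂Measure.pi μ = ∫⁻ w, (∫⁻ x, f (Function.update w i x) ∂μ i) ∂Measure.pi μ := by
  have hmarginal : ∫⋯∫⁻_{i}, f ∂μ = fun w => ∫⁻ x, f (Function.update w i x) ∂μ i :=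
    lmarginal_singleton f i
  rw [← hmarginal]
  refine lintegral_eq_of_lmarginal_eq {i} hf (hf.lmarginal μ) (funext fun w => ?_)
  rw [lmarginal_singleton (∫⋯∫⁻_{i}, f ∂μ)]
  simp [lmarginal_update_of_mem]

lemma ae_pi_of_ae_ae_update (i : ι) {p : (∀ i, X i) → Prop} (hp : MeasurableSet {w | p w})
    (h : ∀ᵐ w ∂Measure.pi μ, ∀ᵐ x ∂μ i, p (Function.update w i x)) :
    ∀ᵐ w ∂Measure.pi μ, p w := by
  have hnull : ∫⁻ w, {w | p w}ᶜ.indicator 1 w ∂Measure.pi μ = 0 := by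
    rw [lintegral_pi_eq_lintegral_lintegral_update i (measurable_one.indicator hp.compl)]
    refine (lintegral_congr_ae (h.mono fun w hw => ?_)).trans lintegral_zero
    exact (lintegral_congr_ae (hw.mono fun x hx => by simp [hx])).trans lintegral_zero
  rwa [lintegral_indicator_one hp.compl] at hnull

end Resampling

section DualFamily

open scoped RealInnerProductSpace
open InnerProductSpace Module

variable {κ E : Type*} [Fintype κ] [NormedAddCommGroup E] [InnerProductSpace ℝ E]

/-- The family biorthogonal to a linearly independent family `v` in the span of `v`, i.e. the
columns of the pseudoinverse of the matrix with rows `v`. It is `0` (the junk value of the inverse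
of a singular Gram matrix) if `v` is linearly dependent. -/
noncomputable def dualFamily (v : κ → E) (j : κ) : E :=
  ∑ l, (gram ℝ v)⁻¹ j l • v l

lemma inner_dualFamily {v : κ → E} (hv : LinearIndependent ℝ v) (i j : κ) :
    ⟪v i, dualFamily v j⟫ = if j = i then 1 else 0 := by
  have hdet : IsUnit (gram ℝ v).det :=
    (det_gram_ne_zero_iff_linearIndependent.mpr hv).isUnit
  calc ⟪v i, dualFamily v j⟫ = ((gram ℝ v)⁻¹ * gram ℝ v) j i := by
        simp only [dualFamily, inner_sum, real_inner_smul_right, mul_apply, gram_apply,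
          real_inner_comm]
    _ = _ := by rw [nonsing_inv_mul _ hdet, one_apply]

lemma dualFamily_eq_zero {v : κ → E} (hv : ¬ LinearIndependent ℝ v) : dualFamily v = 0 := by
  have hdet : (gram ℝ v).det = 0 := not_not.mp (mt linearIndependent_of_det_gram_ne_zero hv)
  ext j
  simp [dualFamily, inv_def, hdet]

lemma measurable_dualFamily [MeasurableSpace E] [BorelSpace E] [SecondCountableTopology E] (j : κ) :
    Measurable fun v : κ → E => dualFamily v j := by
  have hgram : Continuous fun v : κ → E => gram ℝ v :=
    continuous_matrix fun i l => (continuous_apply i).inner (continuous_apply l)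
  simp only [dualFamily, inv_def, Ring.inverse_eq_inv', Matrix.smul_apply, smul_eq_mul]
  refine Finset.measurable_sum _ fun l _ => ?_
  exact ((hgram.matrix_det.measurable.inv.mul
    (hgram.matrix_adjugate.matrix_elem j l).measurable)).smul (measurable_pi_apply l)

lemma finrank_span_image_compl_singleton_lt (v : κ → E) (j : κ) :
    finrank ℝ (Submodule.span ℝ (v '' {j}ᶜ)) < Fintype.card κ := by
  have himage : v '' {j}ᶜ = ((Finset.univ.erase j).image v : Finset E) := by
    ext; simp
  rw [himage]
  calc finrank ℝ (Submodule.span ℝ (((Finset.univ.erase j).image v : Finset E) : Set E))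
      ≤ ((Finset.univ.erase j).image v).card := finrank_span_finset_le_card _
    _ ≤ (Finset.univ.erase j).card := Finset.card_image_le
    _ < Fintype.card κ := Finset.card_erase_lt_of_mem (Finset.mem_univ j)

variable [FiniteDimensional ℝ E]

-- `dualFamily v j` is the multiple of the component `u` of `v j` orthogonal to the other vectors
-- that has inner product `1` with `v j`, so its norm is `1 / ‖u‖`.
lemma norm_sq_dualFamily_mul {v : κ → E} (hv : LinearIndependent ℝ v) (j : κ) :
    ‖dualFamily v j‖ ^ 2 *
      ‖(Submodule.span ℝ (v '' {j}ᶜ))ᗮ.orthogonalProjectionOnto (v j)‖ ^ 2 = 1 := by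
  set K := Submodule.span ℝ (v '' {j}ᶜ)
  set c := (gram ℝ v)⁻¹ j j
  set u := Kᗮ.starProjection (v j)
  have hmem : dualFamily v j ∈ Kᗮ := by
    have hle : K ≤ (Submodule.span ℝ {dualFamily v j})ᗮ := by
      rw [Submodule.span_le]
      rintro _ ⟨l, hl, rfl⟩
      rw [SetLike.mem_coe, Submodule.mem_orthogonal_singleton_iff_inner_left,
        inner_dualFamily hv, if_neg (Ne.symm hl)]
    exact fun x hx => (Submodule.mem_orthogonal_singleton_iff_inner_left).mp (hle hx)
  have hsmul : dualFamily v j = c • u := by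
    rw [← Submodule.starProjection_eq_self_iff.mpr hmem, dualFamily, map_sum,
      Finset.sum_eq_single j]
    · exact map_smul _ _ _
    · intro l _ hl
      have hlK : v l ∈ K := Submodule.subset_span ⟨l, hl, rfl⟩
      rw [map_smul, Submodule.starProjection_orthogonal_apply_eq_zero hlK, smul_zero]
    · simp
  have hone : c * ‖u‖ ^ 2 = 1 := by
    rw [← real_inner_self_eq_norm_sq, ← real_inner_smul_right, ← hsmul,
      Submodule.inner_starProjection_left_eq_right, Submodule.starProjection_eq_self_iff.mpr hmem,
      inner_dualFamily hv, if_pos rfl]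
  have hnorm : ‖Kᗮ.orthogonalProjectionOnto (v j)‖ = ‖u‖ := rfl
  calc ‖dualFamily v j‖ ^ 2 * ‖Kᗮ.orthogonalProjectionOnto (v j)‖ ^ 2
      = (c * ‖u‖ ^ 2) ^ 2 := by
        rw [hsmul, hnorm, norm_smul, mul_pow, Real.norm_eq_abs, sq_abs]
        ring
    _ = 1 := by rw [hone, one_pow]

lemma ofReal_norm_sq_dualFamily_le (v : κ → E) (j : κ) :
    ENNReal.ofReal (‖dualFamily v j‖ ^ 2) ≤ (ENNReal.ofReal
      (‖(Submodule.span ℝ (v '' {j}ᶜ))ᗮ.orthogonalProjectionOnto (v j)‖ ^ 2))⁻¹ := by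
  by_cases hv : LinearIndependent ℝ v
  · rw [ENNReal.le_inv_iff_mul_le, ← ENNReal.ofReal_mul (sq_nonneg _),
      norm_sq_dualFamily_mul hv, ENNReal.ofReal_one]
  · simp [dualFamily_eq_zero hv]

end DualFamily

section GaussianRows

open scoped RealInnerProductSpace
open InnerProductSpace Module

variable {ι E : Type*} [Fintype ι] [NormedAddCommGroup E] [InnerProductSpace ℝ E]
  [FiniteDimensional ℝ E] [MeasurableSpace E] [BorelSpace E]

lemma ae_linearIndependent_restrict_pi_stdGaussian (s : Finset ι) (hs : s.card ≤ finrank ℝ E) :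
    ∀ᵐ w : ι → E ∂Measure.pi fun _ => stdGaussian E, LinearIndependent ℝ (s.restrict w) := by
  induction s using Finset.induction_on with
  | empty => exact ae_of_all _ fun w => linearIndependent_empty_type
  | insert i s hi ih =>
    rw [Finset.card_insert_of_notMem hi] at hs
    have hmeas : MeasurableSet {w : ι → E | LinearIndependent ℝ ((insert i s).restrict w)} :=
      (isOpen_setOfPred_linearIndependent.preimage (by fun_prop)).measurableSet
    refine ae_pi_of_ae_ae_update i hmeas ((ih (by omega)).mono fun w hw => ?_)
    have hspan : Submodule.span ℝ (w '' s) ≠ ⊤ := fun htop => by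
      have hcard := finrank_span_finset_le_card (R := ℝ) (s.image w)
      rw [Set.finrank, Finset.coe_image, htop, finrank_top] at hcard
      exact absurd (hcard.trans Finset.card_image_le) (by omega)
    refine (ae_notMem_stdGaussian hspan).mono fun x hx => ?_
    have heq : Set.EqOn w (Function.update w i x) s := fun l hl =>
      (Function.update_of_ne (ne_of_mem_of_not_mem hl hi) x w).symm
    have hinsert : LinearIndepOn ℝ (Function.update w i x) (insert i s : Finset ι) := by
      rw [Finset.coe_insert, linearIndepOn_insert hi, ← heq.image_eq, Function.update_self]
      exact ⟨(linearIndepOn_congr heq).mp hw, hx⟩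
    exact hinsert

lemma lintegral_norm_sq_dualFamily_le (s : Finset ι) (hs : s.card + 1 < finrank ℝ E) (j : s) :
    ∫⁻ w : ι → E, ENNReal.ofReal (‖dualFamily (s.restrict w) j‖ ^ 2)
        ∂Measure.pi (fun _ => stdGaussian E) ≤
      ENNReal.ofReal (1 / (finrank ℝ E - s.card - 1)) := by
  have hmeas : Measurable fun w : ι → E =>
      ENNReal.ofReal (‖dualFamily (s.restrict w) j‖ ^ 2) :=
    ((measurable_dualFamily j).comp (by fun_prop)).norm.pow_const 2 |>.ennreal_ofReal
  rw [lintegral_pi_eq_lintegral_lintegral_update (j : ι) hmeas]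
  refine (lintegral_mono fun w => ?_).trans_eq
    (lintegral_const _ |>.trans (by rw [measure_univ, mul_one]))
  set K := Submodule.span ℝ (s.restrict w '' {j}ᶜ)
  have hK (x : E) :
      Submodule.span ℝ (s.restrict (Function.update w j x) '' {j}ᶜ) = K := by
    refine congrArg _ (Set.image_congr fun l hl => ?_)
    exact Function.update_of_ne (Subtype.coe_injective.ne hl) x w
  have hrank : finrank ℝ E + 1 ≤ finrank ℝ Kᗮ + s.card := by
    have hlt : finrank ℝ K < s.card := by
      simpa using finrank_span_image_compl_singleton_lt (s.restrict w) j
    have hadd := K.finrank_add_finrank_orthogonal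
    omega
  have hrank' : (finrank ℝ E : ℝ) + 1 ≤ finrank ℝ Kᗮ + s.card := by exact_mod_cast hrank
  have hs' : (s.card : ℝ) + 1 < finrank ℝ E := by exact_mod_cast hs
  calc ∫⁻ x, ENNReal.ofReal (‖dualFamily (s.restrict (Function.update w j x)) j‖ ^ 2)
        ∂stdGaussian E
      ≤ ∫⁻ x, (ENNReal.ofReal (‖Kᗮ.orthogonalProjectionOnto x‖ ^ 2))⁻¹ ∂stdGaussian E := by
        refine lintegral_mono fun x => (ofReal_norm_sq_dualFamily_le _ j).trans_eq ?_
        rw [hK x, Finset.restrict, Function.update_self]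
    _ = ∫⁻ y, (ENNReal.ofReal (‖y‖ ^ 2))⁻¹ ∂stdGaussian Kᗮ := by
        rw [← map_orthogonalProjectionOnto_stdGaussian, lintegral_map (by fun_prop) (by fun_prop)]
    _ = ENNReal.ofReal (1 / (finrank ℝ Kᗮ - 2)) :=
        lintegral_inv_norm_sq_stdGaussian (by omega)
    _ ≤ ENNReal.ofReal (1 / (finrank ℝ E - s.card - 1)) :=
        ENNReal.ofReal_le_ofReal (one_div_le_one_div_of_le (by linarith) (by linarith))

lemma lintegral_inner_sq_dualFamily (s : Finset ι) {i : ι} (hi : i ∉ s) (j : s) :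
    ∫⁻ w : ι → E, ENNReal.ofReal (⟪dualFamily (s.restrict w) j, w i⟫ ^ 2)
        ∂Measure.pi (fun _ => stdGaussian E) =
      ∫⁻ w : ι → E, ENNReal.ofReal (‖dualFamily (s.restrict w) j‖ ^ 2)
        ∂Measure.pi (fun _ => stdGaussian E) := by
  have hdual : Measurable fun w : ι → E => dualFamily (s.restrict w) j :=
    (measurable_dualFamily j).comp (by fun_prop)
  have hrestrict (w : ι → E) (x : E) : s.restrict (Function.update w i x) = s.restrict w :=
    funext fun l => by
      rw [Finset.restrict, Finset.restrict, Function.update_of_ne (ne_of_mem_of_not_mem l.2 hi)]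
  rw [lintegral_pi_eq_lintegral_lintegral_update i
    ((hdual.inner (measurable_pi_apply i)).pow_const 2).ennreal_ofReal]
  refine lintegral_congr fun w => ?_
  simp only [hrestrict, Function.update_self]
  exact lintegral_inner_sq_stdGaussian _

end GaussianRows

section OrthogonalInvariance

open scoped RealInnerProductSpace

variable {ι : Type*} [Fintype ι] {E : Type*} [NormedAddCommGroup E] [InnerProductSpace ℝ E]

lemma sum_norm_sq_sum_smul [DecidableEq ι] {V : Matrix ι ι ℝ} (hV : Vᵀ * V = 1) (w : ι → E) :
    ∑ i, ‖∑ j, V i j • w j‖ ^ 2 = ∑ i, ‖w i‖ ^ 2 := by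
  have hcol (j l : ι) : ∑ i, V i j * V i l = if j = l then 1 else 0 := by
    rw [← one_apply, ← hV, mul_apply]
    rfl
  calc ∑ i, ‖∑ j, V i j • w j‖ ^ 2 = ∑ j, ∑ l, (∑ i, V i j * V i l) * ⟪w l, w j⟫ := by
        simp only [← real_inner_self_eq_norm_sq, sum_inner, inner_sum, real_inner_smul_left,
          real_inner_smul_right, Finset.sum_mul, mul_assoc]
        rw [Finset.sum_comm]
        exact Finset.sum_congr rfl fun j _ => Finset.sum_comm
    _ = ∑ i, ‖w i‖ ^ 2 := by
        simp only [hcol, ite_mul, one_mul, zero_mul, Finset.sum_ite_eq, Finset.mem_univ, if_true,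
          real_inner_self_eq_norm_sq]

variable [FiniteDimensional ℝ E] [MeasurableSpace E] [BorelSpace E]

lemma map_toLp_pi_stdGaussian :
    (Measure.pi fun _ : ι => stdGaussian E).map (WithLp.toLp 2) =
      stdGaussian (PiLp 2 fun _ : ι => E) := by
  refine Measure.ext_of_charFun (funext fun t => ?_)
  simp only [charFun_pi, charFun_stdGaussian, ← Complex.exp_sum, ← Complex.ofReal_pow,
    PiLp.norm_sq_eq_of_L2, Complex.ofReal_sum, ← Finset.sum_div, ← Finset.sum_neg_distrib]

lemma map_sum_smul_pi_stdGaussian [DecidableEq ι] {V : Matrix ι ι ℝ} (hV : Vᵀ * V = 1) :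
    (Measure.pi fun _ : ι => stdGaussian E).map (fun w i => ∑ j, V i j • w j) =
      Measure.pi fun _ => stdGaussian E := by
  let L : PiLp 2 (fun _ : ι => E) →ₗᵢ[ℝ] PiLp 2 fun _ : ι => E :=
    { toFun := fun x => WithLp.toLp 2 fun i => ∑ j, V i j • x j
      map_add' := fun x y => by ext i; simp [Finset.sum_add_distrib]
      map_smul' := fun c x => by ext i; simp [Finset.smul_sum, smul_comm c]
      norm_map' := fun x => by
        rw [← sq_eq_sq₀ (norm_nonneg _) (norm_nonneg _), PiLp.norm_sq_eq_of_L2,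
          PiLp.norm_sq_eq_of_L2]
        exact sum_norm_sq_sum_smul hV fun i => x i }
  have hL : (stdGaussian (PiLp 2 fun _ : ι => E)).map L = stdGaussian _ :=
    stdGaussian_map (L.toLinearIsometryEquiv rfl)
  have hofLp : (stdGaussian (PiLp 2 fun _ : ι => E)).map WithLp.ofLp =
      Measure.pi fun _ => stdGaussian E := by
    rw [← map_toLp_pi_stdGaussian, Measure.map_map (by fun_prop) (by fun_prop)]
    exact Measure.map_id
  calc (Measure.pi fun _ : ι => stdGaussian E).map (fun w i => ∑ j, V i j • w j)
      = (((Measure.pi fun _ : ι => stdGaussian E).map (WithLp.toLp 2)).map L).map WithLp.ofLp := by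
        rw [Measure.map_map L.continuous.measurable (by fun_prop),
          Measure.map_map (by fun_prop) (L.continuous.measurable.comp (by fun_prop))]
        rfl
    _ = _ := by rw [map_toLp_pi_stdGaussian, hL, hofLp]

end OrthogonalInvariance

section GaussianEnsemble

variable {n k : ℕ}

/-- The matrix with rows `w`. -/
def rowMatrix (w : Fin n → EuclideanSpace ℝ (Fin k)) : Matrix (Fin n) (Fin k) ℝ :=
  of fun i => WithLp.ofLp (w i)

lemma map_mul_rowMatrix_pi_stdGaussian {V : Matrix (Fin n) (Fin n) ℝ} (hV : Vᵀ * V = 1) :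
    (Measure.pi fun _ : Fin n => stdGaussian (EuclideanSpace ℝ (Fin k))).map
      (fun w => of.symm (V * rowMatrix w)) = gaussianEnsemble n k := by
  have hrow : (stdGaussian (EuclideanSpace ℝ (Fin k))).map WithLp.ofLp =
      Measure.pi fun _ => gaussianReal 0 1 := by
    rw [← map_pi_eq_stdGaussian, Measure.map_map (by fun_prop) (by fun_prop)]
    exact Measure.map_id
  have hrows (w : Fin n → EuclideanSpace ℝ (Fin k)) :
      of.symm (V * rowMatrix w) = fun i => WithLp.ofLp (∑ j, V i j • w j) := by
    ext i a
    simp [rowMatrix, mul_apply]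
  have : SigmaFinite ((stdGaussian (EuclideanSpace ℝ (Fin k))).map WithLp.ofLp) := by
    rw [hrow]; infer_instance
  simp only [hrows]
  calc (Measure.pi fun _ : Fin n => stdGaussian (EuclideanSpace ℝ (Fin k))).map
        (fun w i => WithLp.ofLp (∑ j, V i j • w j))
      = (Measure.pi fun _ : Fin n => stdGaussian (EuclideanSpace ℝ (Fin k))).map
        (fun w i => WithLp.ofLp (w i)) := by
        conv_rhs => rw [← map_sum_smul_pi_stdGaussian hV]
        rw [Measure.map_map (by fun_prop) (by fun_prop)]
        rfl
    _ = gaussianEnsemble n k := by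
        rw [Measure.pi_map_pi fun _ => by fun_prop, hrow, gaussianEnsemble]

end GaussianEnsemble

section Measurability

lemma upperSemicontinuous_of_exists_continuous_le {X : Type*} [TopologicalSpace X] {f : X → ℝ}
    (h : ∀ x, ∃ g : X → ℝ, Continuous g ∧ f ≤ g ∧ g x = f x) : UpperSemicontinuous f := by
  intro x y hxy
  obtain ⟨g, hg, hle, hx⟩ := h x
  exact (hg.continuousAt.eventually_lt_const (hx.trans_lt hxy)).mono fun z hz => (hle z).trans_lt hz

variable {n k : ℕ} {A : Matrix (Fin n) (Fin n) 𝕜}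

-- An infimum over `Y` of functions that are continuous in `Ω`, although `nystrom A Ω` is not.
lemma upperSemicontinuous_re_trace_sub_nystrom (hA : A.PosSemidef) :
    UpperSemicontinuous fun Ω : Matrix (Fin n) (Fin k) 𝕜 => RCLike.re (A - nystrom A Ω).trace := by
  refine upperSemicontinuous_of_exists_continuous_le fun Ω₀ =>
    ⟨fun Ω => RCLike.re ((1 - Ω * nystromCoeff A Ω₀)ᴴ * A * (1 - Ω * nystromCoeff A Ω₀)).trace,
      ?_, fun Ω => re_trace_sub_nystrom_le hA Ω _, by rw [sub_nystrom_eq hA]⟩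
  fun_prop

end Measurability

section DiagonalBound

open scoped RealInnerProductSpace

variable {n k : ℕ} {d : Fin n → ℝ} {s : Finset (Fin n)}

lemma trace_conjTranspose_mul_diagonal_mul {ι κ : Type*} [Fintype ι] [DecidableEq ι] [Fintype κ]
    (d : ι → ℝ) (M : Matrix ι κ ℝ) :
    (Mᴴ * diagonal d * M).trace = ∑ i, d i * ∑ j, M i j ^ 2 := by
  rw [Matrix.mul_assoc, trace_mul_comm, Matrix.mul_assoc]
  simp only [trace, diag, diagonal_mul]
  simp only [mul_apply, conjTranspose_apply, star_trivial, sq]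

/-- The trial matrix `Y` of the variational bound, whose columns in `s` are dual to the rows
`s.restrict w` and whose other columns vanish: `rowMatrix w * Y` reproduces the rows of the
identity matrix in `s` exactly. -/
noncomputable def dualMatrix (w : Fin n → EuclideanSpace ℝ (Fin k)) (s : Finset (Fin n)) :
    Matrix (Fin k) (Fin n) ℝ :=
  of fun a j => if h : j ∈ s then dualFamily (s.restrict w) ⟨j, h⟩ a else 0

lemma rowMatrix_mul_dualMatrix_apply (w : Fin n → EuclideanSpace ℝ (Fin k)) (i j : Fin n) :
    (rowMatrix w * dualMatrix w s) i j =
      if h : j ∈ s then ⟪dualFamily (s.restrict w) ⟨j, h⟩, w i⟫ else 0 := by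
  by_cases h : j ∈ s
  · simp [dualMatrix, h, rowMatrix, mul_apply, PiLp.inner_apply]
  · simp [dualMatrix, h, mul_apply]

lemma one_sub_rowMatrix_mul_dualMatrix_apply_of_mem {w : Fin n → EuclideanSpace ℝ (Fin k)}
    (hw : LinearIndependent ℝ (s.restrict w)) {i : Fin n} (hi : i ∈ s) (j : Fin n) :
    (1 - rowMatrix w * dualMatrix w s : Matrix (Fin n) (Fin n) ℝ) i j = 0 := by
  rw [Matrix.sub_apply, rowMatrix_mul_dualMatrix_apply, one_apply]
  by_cases hj : j ∈ s
  · have hdual : ⟪w i, dualFamily (s.restrict w) ⟨j, hj⟩⟫ = if i = j then 1 else 0 :=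
      (inner_dualFamily hw ⟨i, hi⟩ ⟨j, hj⟩).trans (by simp [eq_comm])
    rw [dif_pos hj, real_inner_comm, hdual, sub_self]
  · rw [dif_neg hj, if_neg (ne_of_mem_of_not_mem hi hj), sub_zero]

lemma sum_sq_one_sub_rowMatrix_mul_dualMatrix_of_notMem
    (w : Fin n → EuclideanSpace ℝ (Fin k)) {i : Fin n} (hi : i ∉ s) :
    ∑ j, (1 - rowMatrix w * dualMatrix w s : Matrix (Fin n) (Fin n) ℝ) i j ^ 2 =
      1 + ∑ j : s, ⟪dualFamily (s.restrict w) j, w i⟫ ^ 2 := by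
  have hdiag : (1 - rowMatrix w * dualMatrix w s : Matrix (Fin n) (Fin n) ℝ) i i = 1 := by
    simp [rowMatrix_mul_dualMatrix_apply, hi]
  have hoff (j : s) : (1 - rowMatrix w * dualMatrix w s : Matrix (Fin n) (Fin n) ℝ) i j =
      -⟪dualFamily (s.restrict w) j, w i⟫ := by
    simp [rowMatrix_mul_dualMatrix_apply, one_apply_ne (ne_of_mem_of_not_mem j.2 hi).symm]
  rw [← Finset.sum_compl_add_sum s, Finset.sum_eq_single_of_mem i (Finset.mem_compl.mpr hi),
    ← Finset.sum_coe_sort s]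
  · simp only [hdiag, hoff, one_pow, neg_sq]
  · intro j hj hji
    simp [rowMatrix_mul_dualMatrix_apply, Finset.mem_compl.mp hj, one_apply_ne hji.symm]

lemma trace_diagonal_sub_nystrom_rowMatrix_le (hd : ∀ i, 0 ≤ d i)
    {w : Fin n → EuclideanSpace ℝ (Fin k)} (hw : LinearIndependent ℝ (s.restrict w)) :
    (diagonal d - nystrom (diagonal d) (rowMatrix w)).trace ≤
      ∑ i ∈ sᶜ, d i * (1 + ∑ j : s, ⟪dualFamily (s.restrict w) j, w i⟫ ^ 2) := by
  refine (re_trace_sub_nystrom_le (PosSemidef.diagonal hd) (rowMatrix w)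
    (dualMatrix w s)).trans_eq ?_
  rw [RCLike.re_to_real, trace_conjTranspose_mul_diagonal_mul, ← Finset.sum_add_sum_compl s,
    Finset.sum_eq_zero fun i hi => by
      simp only [one_sub_rowMatrix_mul_dualMatrix_apply_of_mem hw hi, ne_eq, OfNat.ofNat_ne_zero,
        not_false_eq_true, zero_pow, Finset.sum_const_zero, mul_zero], zero_add]
  exact Finset.sum_congr rfl fun i hi => by
    rw [sum_sq_one_sub_rowMatrix_mul_dualMatrix_of_notMem w (Finset.mem_compl.mp hi)]

end DiagonalBound

section ExpectedError

open scoped RealInnerProductSpace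

section

variable {ι E : Type*} [NormedAddCommGroup E] [InnerProductSpace ℝ E]
  [FiniteDimensional ℝ E] [MeasurableSpace E] [BorelSpace E] {s : Finset ι}

lemma measurable_inner_sq_dualFamily (i : ι) (j : s) :
    Measurable fun w : ι → E => ⟪dualFamily (s.restrict w) j, w i⟫ ^ 2 :=
  (((measurable_dualFamily j).comp (by fun_prop)).inner (measurable_pi_apply i)).pow_const 2

variable [Fintype ι]

lemma lintegral_one_add_sum_inner_sq_dualFamily_le (hs : s.card + 1 < Module.finrank ℝ E)
    {i : ι} (hi : i ∉ s) :
    ∫⁻ w : ι → E, ENNReal.ofReal (1 + ∑ j : s, ⟪dualFamily (s.restrict w) j, w i⟫ ^ 2)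
        ∂Measure.pi (fun _ => stdGaussian E) ≤
      ENNReal.ofReal (1 + s.card / (Module.finrank ℝ E - s.card - 1)) := by
  have hs' : (s.card : ℝ) + 1 < Module.finrank ℝ E := by exact_mod_cast hs
  have hpos : (0 : ℝ) < Module.finrank ℝ E - s.card - 1 := by linarith
  calc ∫⁻ w : ι → E, ENNReal.ofReal (1 + ∑ j : s, ⟪dualFamily (s.restrict w) j, w i⟫ ^ 2)
        ∂Measure.pi (fun _ => stdGaussian E)
      = ∫⁻ w : ι → E, (1 + ∑ j : s, ENNReal.ofReal (⟪dualFamily (s.restrict w) j, w i⟫ ^ 2))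
        ∂Measure.pi (fun _ => stdGaussian E) := by
        refine lintegral_congr fun w => ?_
        rw [ENNReal.ofReal_add zero_le_one (Finset.sum_nonneg fun j _ => sq_nonneg _),
          ENNReal.ofReal_one, ENNReal.ofReal_sum_of_nonneg fun j _ => sq_nonneg _]
    _ = 1 + ∑ j : s, ∫⁻ w : ι → E, ENNReal.ofReal (⟪dualFamily (s.restrict w) j, w i⟫ ^ 2)
        ∂Measure.pi (fun _ => stdGaussian E) := by
        rw [lintegral_add_left measurable_const, lintegral_one, measure_univ,
          lintegral_finsetSum _ fun j _ => (measurable_inner_sq_dualFamily i j).ennreal_ofReal]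
    _ ≤ 1 + ∑ j : s, ENNReal.ofReal (1 / (Module.finrank ℝ E - s.card - 1)) := by
        gcongr with j
        exact (lintegral_inner_sq_dualFamily s hi j).trans_le
          (lintegral_norm_sq_dualFamily_le s hs j)
    _ = ENNReal.ofReal (1 + s.card / (Module.finrank ℝ E - s.card - 1)) := by
        rw [ENNReal.ofReal_add zero_le_one (by positivity), ENNReal.ofReal_one, Finset.sum_const,
          ← ENNReal.ofReal_nsmul]
        simp [div_eq_mul_inv]

lemma lintegral_sum_mul_one_add_sum_inner_sq_dualFamily_le [DecidableEq ι] {d : ι → ℝ}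
    (hd : ∀ i, 0 ≤ d i) (hs : s.card + 1 < Module.finrank ℝ E) :
    ∫⁻ w : ι → E, ENNReal.ofReal
        (∑ i ∈ sᶜ, d i * (1 + ∑ j : s, ⟪dualFamily (s.restrict w) j, w i⟫ ^ 2))
        ∂Measure.pi (fun _ => stdGaussian E) ≤
      ENNReal.ofReal ((1 + s.card / (Module.finrank ℝ E - s.card - 1)) * ∑ i ∈ sᶜ, d i) := by
  let g (i : ι) (w : ι → E) : ℝ := 1 + ∑ j : s, ⟪dualFamily (s.restrict w) j, w i⟫ ^ 2
  have hmeas (i : ι) : Measurable fun w => ENNReal.ofReal (g i w) :=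
    ((Finset.measurable_sum _ fun j _ =>
      measurable_inner_sq_dualFamily i j).const_add 1).ennreal_ofReal
  have hg (i : ι) (w : ι → E) : 0 ≤ g i w :=
    add_nonneg zero_le_one (Finset.sum_nonneg fun j _ => sq_nonneg _)
  calc ∫⁻ w, ENNReal.ofReal (∑ i ∈ sᶜ, d i * g i w) ∂Measure.pi (fun _ => stdGaussian E)
      = ∫⁻ w, (∑ i ∈ sᶜ, ENNReal.ofReal (d i) * ENNReal.ofReal (g i w))
        ∂Measure.pi (fun _ => stdGaussian E) := by
        refine lintegral_congr fun w => ?_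
        rw [ENNReal.ofReal_sum_of_nonneg fun i _ => mul_nonneg (hd i) (hg i w)]
        exact Finset.sum_congr rfl fun i _ => ENNReal.ofReal_mul (hd i)
    _ = ∑ i ∈ sᶜ, ENNReal.ofReal (d i) *
          ∫⁻ w, ENNReal.ofReal (g i w) ∂Measure.pi (fun _ => stdGaussian E) := by
        rw [lintegral_finsetSum _ fun i _ => (hmeas i).const_mul _]
        exact Finset.sum_congr rfl fun i _ => lintegral_const_mul _ (hmeas i)
    _ ≤ ∑ i ∈ sᶜ, ENNReal.ofReal (d i) *
          ENNReal.ofReal (1 + s.card / (Module.finrank ℝ E - s.card - 1)) := by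
        gcongr with i hi
        exact lintegral_one_add_sum_inner_sq_dualFamily_le hs (Finset.mem_compl.mp hi)
    _ = _ := by
        rw [← Finset.sum_mul, ← ENNReal.ofReal_sum_of_nonneg fun i _ => hd i,
          ← ENNReal.ofReal_mul (Finset.sum_nonneg fun i _ => hd i), mul_comm]

end

variable {n k : ℕ}

lemma lintegral_trace_diagonal_sub_nystrom_le {d : Fin n → ℝ} (hd : ∀ i, 0 ≤ d i)
    {s : Finset (Fin n)} (hs : s.card + 1 < k) :
    ∫⁻ w : Fin n → EuclideanSpace ℝ (Fin k),
        ENNReal.ofReal (diagonal d - nystrom (diagonal d) (rowMatrix w)).trace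
        ∂Measure.pi (fun _ => stdGaussian (EuclideanSpace ℝ (Fin k))) ≤
      ENNReal.ofReal ((1 + s.card / (k - s.card - 1)) * ∑ i ∈ sᶜ, d i) := by
  have hk : Module.finrank ℝ (EuclideanSpace ℝ (Fin k)) = k := finrank_euclideanSpace_fin
  have hae := ae_linearIndependent_restrict_pi_stdGaussian
    (E := EuclideanSpace ℝ (Fin k)) s (by omega)
  have hsum := lintegral_sum_mul_one_add_sum_inner_sq_dualFamily_le
    (E := EuclideanSpace ℝ (Fin k)) hd (hk.symm ▸ hs)
  rw [hk] at hsum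
  exact (lintegral_mono_ae (hae.mono fun w hw => ENNReal.ofReal_le_ofReal
    (trace_diagonal_sub_nystrom_rowMatrix_le hd hw))).trans hsum

lemma lintegral_gaussianEnsemble_eq {V : Matrix (Fin n) (Fin n) ℝ} (hV : Vᵀ * V = 1)
    {f : Matrix (Fin n) (Fin k) ℝ → ℝ≥0∞} (hf : Measurable fun ω => f (of ω)) :
    ∫⁻ ω, f (of ω) ∂gaussianEnsemble n k = ∫⁻ w, f (V * rowMatrix w)
      ∂Measure.pi (fun _ => stdGaussian (EuclideanSpace ℝ (Fin k))) := by
  have hmeas : Measurable fun w : Fin n → EuclideanSpace ℝ (Fin k) =>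
      of.symm (V * rowMatrix w) := by
    refine measurable_pi_lambda _ fun i => measurable_pi_lambda _ fun a => ?_
    simp only [of_symm_apply, mul_apply, rowMatrix, of_apply]
    fun_prop
  rw [← map_mul_rowMatrix_pi_stdGaussian hV, lintegral_map hf hmeas]
  rfl

lemma tailNorm_one_eq_sum_compl (A : Matrix (Fin n) (Fin n) 𝕜) (ϱ : ℕ) :
    tailNorm 1 A ϱ = ∑ i ∈ ({i : Fin n | (i : ℕ) < ϱ} : Finset (Fin n))ᶜ, sval A i := by
  have hmap : Finset.Ico ϱ n =
      ({i : Fin n | (i : ℕ) < ϱ} : Finset (Fin n))ᶜ.map Fin.valEmbedding := by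
    ext i
    simp [Fin.exists_iff]
  rw [tailNorm_one, hmap, Finset.sum_map]
  rfl

variable {A : Matrix (Fin n) (Fin n) ℝ}

lemma measurable_trace_sub_nystrom (hA : A.PosSemidef) :
    Measurable fun ω : Fin n → Fin k → ℝ => (A - nystrom A (of ω)).trace := by
  have husc : UpperSemicontinuous fun ω : Fin n → Fin k → ℝ => (A - nystrom A (of ω)).trace :=
    upperSemicontinuous_re_trace_sub_nystrom (𝕜 := ℝ) hA
  exact husc.measurable

lemma lintegral_trace_sub_nystrom_le (hA : A.PosSemidef) {ϱ : ℕ} (hϱ : ϱ + 1 < k) :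
    ∫⁻ ω, ENNReal.ofReal (A - nystrom A (of ω)).trace ∂gaussianEnsemble n k ≤
      ENNReal.ofReal ((1 + ϱ / (k - ϱ - 1)) * schatten 1 (A - truncate A ϱ)) := by
  obtain ⟨U, hU⟩ := exists_isRightSingularBasis (M := A)
  set V : Matrix (Fin n) (Fin n) ℝ := U.1
  set D : Matrix (Fin n) (Fin n) ℝ := diagonal fun i => sval A i
  set s : Finset (Fin n) := {i : Fin n | (i : ℕ) < ϱ}
  have hV : Vᴴ * V = 1 := mem_unitaryGroup_iff'.mp U.2
  have hVt : Vᵀ * V = 1 := hV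
  have hAD : A = V * D * Vᴴ := hU.eq_ofSpectrum hA
  have htrace (Ω : Matrix (Fin n) (Fin k) ℝ) :
      (A - nystrom A (V * Ω)).trace = (D - nystrom D Ω).trace := by
    rw [hAD, nystrom_unitary_conj hV, ← Matrix.sub_mul, ← Matrix.mul_sub, trace_mul_comm,
      ← Matrix.mul_assoc, hV, Matrix.one_mul]
  have hcard : s.card ≤ ϱ := by
    simp [s, Fin.card_filter_val_lt]
  have hcard' : (s.card : ℝ) ≤ ϱ := by exact_mod_cast hcard
  have hϱ' : (ϱ : ℝ) + 1 < k := by exact_mod_cast hϱ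
  rw [lintegral_gaussianEnsemble_eq hVt (f := fun Ω => ENNReal.ofReal (A - nystrom A Ω).trace)
    (measurable_trace_sub_nystrom hA).ennreal_ofReal]
  refine (lintegral_congr fun w => congrArg ENNReal.ofReal (htrace (rowMatrix w))).trans_le
    ((lintegral_trace_diagonal_sub_nystrom_le (fun i => sval_nonneg A i)
      (by omega : s.card + 1 < k)).trans (ENNReal.ofReal_le_ofReal ?_))
  rw [schatten_sub_truncate A ϱ le_rfl, tailNorm_one_eq_sum_compl]
  have hnonneg : 0 ≤ ∑ i ∈ sᶜ, sval A i := Finset.sum_nonneg fun i _ => sval_nonneg A i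
  gcongr
  linarith

lemma integrable_trace_sub_nystrom (hA : A.PosSemidef) :
    Integrable (fun ω => (A - nystrom A (of ω)).trace) (gaussianEnsemble n k) := by
  have : IsProbabilityMeasure (gaussianEnsemble n k) := by
    unfold gaussianEnsemble; infer_instance
  refine .of_bound (measurable_trace_sub_nystrom hA).aestronglyMeasurable A.trace
    (ae_of_all _ fun ω => ?_)
  rw [Real.norm_of_nonneg ((posSemidef_sub_nystrom hA _).trace_nonneg)]
  rw [trace_sub]
  exact sub_le_self _ (posSemidef_nystrom hA _).trace_nonneg

lemma integral_trace_sub_nystrom_le (hA : A.PosSemidef) {ϱ : ℕ} (hϱ : ϱ + 1 < k) :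
    ∫ ω, (A - nystrom A (of ω)).trace ∂gaussianEnsemble n k ≤
      (1 + ϱ / (k - ϱ - 1)) * schatten 1 (A - truncate A ϱ) := by
  have hϱ' : (ϱ : ℝ) + 1 < k := by exact_mod_cast hϱ
  have hpos : (0 : ℝ) < k - ϱ - 1 := by linarith
  rw [integral_eq_lintegral_of_nonneg_ae
    (ae_of_all _ fun ω => (posSemidef_sub_nystrom hA _).trace_nonneg)
    (measurable_trace_sub_nystrom hA).aestronglyMeasurable]
  exact ENNReal.toReal_le_of_le_ofReal (mul_nonneg (by positivity) (schatten_one_nonneg _))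
    (lintegral_trace_sub_nystrom_le hA hϱ)

theorem stmt3_general (hA : A.PosSemidef) (r : ℕ) {ϱ : ℕ} (hϱ : ϱ + 1 < k) :
    ∫ ω, schatten 1 (A - truncate (nystrom A (of ω)) r) ∂gaussianEnsemble n k ≤
      schatten 1 (A - truncate A r) +
        (1 + (ϱ : ℝ) / ((k : ℝ) - ϱ - 1)) * schatten 1 (A - truncate A ϱ) := by
  have : IsProbabilityMeasure (gaussianEnsemble n k) := by
    unfold gaussianEnsemble; infer_instance
  have hint := integrable_trace_sub_nystrom (k := k) hA
  calc ∫ ω, schatten 1 (A - truncate (nystrom A (of ω)) r) ∂gaussianEnsemble n k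
      ≤ ∫ ω, (schatten 1 (A - truncate A r) + (A - nystrom A (of ω)).trace)
          ∂gaussianEnsemble n k := by
        refine integral_mono_of_nonneg (ae_of_all _ fun ω => schatten_one_nonneg _)
          ((integrable_const _).add hint) (ae_of_all _ fun ω => ?_)
        exact (schatten_one_sub_truncate_nystrom_le hA (of ω) r).trans_eq
          (congrArg _ (schatten_one_sub_nystrom hA (of ω)))
    _ = schatten 1 (A - truncate A r) + ∫ ω, (A - nystrom A (of ω)).trace
          ∂gaussianEnsemble n k := by
        rw [integral_add (integrable_const _) hint, integral_const, probReal_univ, one_smul]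
    _ ≤ _ := by
        gcongr
        exact integral_trace_sub_nystrom_le hA hϱ

end ExpectedError

theorem stmt3 {n k r : ℕ} (A : Matrix (Fin n) (Fin n) ℝ) (hA : A.PosSemidef)
    (hr : 1 ≤ r) (hrk : r < k) (hkn : k ≤ n) :
    ∀ ϱ : ℕ, ϱ + 1 < k →
      (∫ ω, schatten 1 (A - truncate (nystrom A (Matrix.of ω)) r) ∂ gaussianEnsemble n k)
        ≤ schatten 1 (A - truncate A r)
          + 2 * ((1 + (ϱ : ℝ) / ((k : ℝ) - ϱ - 1)) * schatten 1 (A - truncate A ϱ)) := by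
  intro ϱ hϱ
  have hnonneg := (integral_nonneg fun ω => (posSemidef_sub_nystrom hA (of ω)).trace_nonneg).trans
    (integral_trace_sub_nystrom_le hA hϱ)
  linarith [stmt3_general hA r hϱ]

end PsdSketch
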